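/- arXiv:2209.11454 — 4 statements merged into one kernel-verified Lean document; each statement's English description precedes it below -/
import Mathlib

section
/- Let k ≥ 2 be an integer, let ϱ ∈ ℍ, let a ∈ ℝ be a real number, and let h be holomorphic on an open disc B(ϱ, r) ⊂ ℍ. Define f(z) := a·((z−ϱ)(z−conj(ϱ))/(ϱ−conj(ϱ)))^{−k} + h(z) for z ∈ B(ϱ, r) ∖ {ϱ}. Let A, B, C ∈ ℝ with B² − 4AC > 0. Then for every 0 < ε < r one has Re( i^{k−1} ∮_{|z−ϱ|=ε} f(z)·(Az² + Bz + C)^{k−1} dz ) = 0, where the integral is taken once counterclockwise around the circle of radius ε centered at ϱ. -/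
open Complex ComplexConjugate Metric Set MeasureTheory

noncomputable section

/-- The upper half-plane, as a subset of `ℂ`. -/
def UH : Set ℂ := {z | 0 < z.im}

/-- The elliptic pole term `((z−ϱ)(z−conj ϱ)/(ϱ−conj ϱ))^(−k)`. -/
def polePart (k : ℕ) (ϱ z : ℂ) : ℂ :=
  ((z - ϱ) * (z - conj ϱ) / (ϱ - conj ϱ)) ^ (-(k : ℤ))

lemma aux_coeff_real (α : ℂ) (β : ℝ) (n : ℕ) :
    ((Polynomial.C α + Polynomial.C (β:ℂ) * Polynomial.X
      + Polynomial.C (conj α) * Polynomial.X ^ 2) ^ n).natDegree ≤ 2 * n ∧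
    ∃ c : ℝ, ((Polynomial.C α + Polynomial.C (β:ℂ) * Polynomial.X
      + Polynomial.C (conj α) * Polynomial.X ^ 2) ^ n).coeff n = (c : ℂ) := by
  set p : Polynomial ℂ := Polynomial.C α + Polynomial.C (β:ℂ) * Polynomial.X
      + Polynomial.C (conj α) * Polynomial.X ^ 2 with hp
  have hd : p.natDegree ≤ 2 := by rw [hp]; compute_degree
  have hdn : ∀ m : ℕ, (p ^ m).natDegree ≤ 2 * m := fun m => by
    have := Polynomial.natDegree_pow_le_of_le m hd
    linarith
  have h1 : Polynomial.reflect 2 p = p.map (starRingEnd ℂ) := by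
    have e1 : Polynomial.reflect 2 (Polynomial.C α) = Polynomial.C α * Polynomial.X ^ 2 := by
      simp [Polynomial.reflect_C]
    have e2 : Polynomial.reflect 2 (Polynomial.C (β:ℂ) * Polynomial.X)
        = Polynomial.C (β:ℂ) * Polynomial.X := by
      have := Polynomial.reflect_C_mul_X_pow 2 1 (c := (β:ℂ))
      simpa [Polynomial.revAt_le] using this
    have e3 : Polynomial.reflect 2 (Polynomial.C (conj α) * Polynomial.X ^ 2)
        = Polynomial.C (conj α) := by
      have := Polynomial.reflect_C_mul_X_pow 2 2 (c := conj α)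
      simpa [Polynomial.revAt_le] using this
    rw [hp, Polynomial.reflect_add, Polynomial.reflect_add, e1, e2, e3]
    simp
    ring
  have h2 : ∀ m : ℕ, Polynomial.reflect (2 * m) (p ^ m) = (p ^ m).map (starRingEnd ℂ) := by
    intro m
    induction m with
    | zero => simp
    | succ m ih =>
      rw [pow_succ, mul_add, mul_one, Polynomial.reflect_mul _ _ (hdn m) hd, ih, h1,
        Polynomial.map_mul]
  refine ⟨hdn n, ?_⟩
  have h3 := congrArg (fun q => Polynomial.coeff q n) (h2 n)
  simp only [Polynomial.coeff_reflect, Polynomial.coeff_map] at h3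
  rw [Polynomial.revAt_le (by omega), show 2 * n - n = n by omega] at h3
  obtain ⟨c, hc⟩ := Complex.conj_eq_iff_real.1 h3.symm
  exact ⟨c, hc⟩

lemma aux_int (ϱ : ℂ) (hϱ : 0 < ϱ.im) (ε : ℝ) (hε0 : 0 < ε)
    (hb : ∀ z ∈ closedBall ϱ ε, z - conj ϱ ≠ 0) (m : ℤ) :
    (∮ z in C(ϱ, ε), ((z - ϱ) / (z - conj ϱ)) ^ (m - 1) * ((z - conj ϱ) ^ 2)⁻¹)
      = if m = 0 then 2 * Real.pi * I / (ϱ - conj ϱ) else 0 := by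
  have hδ : ϱ - conj ϱ ≠ 0 := hb ϱ (mem_closedBall_self hε0.le)
  have hu : ∀ z ∈ sphere ϱ ε, z - ϱ ≠ 0 := fun z hz h0 => by
    rw [mem_sphere, dist_eq, h0] at hz; simp at hz; linarith
  split_ifs with hm
  · subst hm
    have hdiff : DifferentiableOn ℂ (fun z => (z - conj ϱ)⁻¹) (closedBall ϱ ε) := by
      intro z hz
      have hd : DifferentiableAt ℂ (fun z => z - conj ϱ) z := by fun_prop
      exact (hd.inv (hb z hz)).differentiableWithinAt
    have := hdiff.circleIntegral_sub_inv_smul (mem_ball_self hε0)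
    rw [div_eq_mul_inv, ← smul_eq_mul, ← this]
    apply circleIntegral.integral_congr hε0.le
    intro z hz
    have h1 := hb z (sphere_subset_closedBall hz)
    have h2 := hu z hz
    simp
    field_simp
  · have hm' : (m : ℂ) ≠ 0 := by exact_mod_cast hm
    apply circleIntegral.integral_eq_zero_of_hasDerivWithinAt
      (f := fun z => ((z - ϱ) / (z - conj ϱ)) ^ m / (m * (ϱ - conj ϱ))) hε0.le
    intro z hz
    have h1 := hb z (sphere_subset_closedBall hz)
    have h2 := hu z hz
    have d1 : HasDerivAt (fun z => (z - ϱ) / (z - conj ϱ))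
        ((1 * (z - conj ϱ) - (z - ϱ) * 1) / (z - conj ϱ) ^ 2) z :=
      ((hasDerivAt_id z).sub_const ϱ).div ((hasDerivAt_id z).sub_const _) h1
    have d2 := (hasDerivAt_zpow m ((z - ϱ) / (z - conj ϱ)) (Or.inl (div_ne_zero h2 h1))).comp z d1
    have d3 := (d2.div_const (m * (ϱ - conj ϱ))).hasDerivWithinAt (s := sphere ϱ ε)
    refine d3.congr_deriv ?_
    generalize ((z - ϱ) / (z - conj ϱ)) ^ (m - 1) = W
    field_simp
    ring

/-- Local residue computation: if `f(z) = a·((z−ϱ)(z−conj ϱ)/(ϱ−conj ϱ))^(−k) + h(z)` with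
`a` real, `h` holomorphic on `B(ϱ,r) ⊆ ℍ`, and `A, B, C` real with `B² − 4AC > 0`, then
`Re(i^(k−1)·∮_{|z−ϱ|=ε} f(z)·(Az² + Bz + C)^(k−1) dz) = 0` for all `0 < ε < r`. -/
theorem residue_real_part_vanishes (k : ℕ) (hk : 2 ≤ k) (ϱ : ℂ) (hϱ : ϱ ∈ UH)
    (r : ℝ) (hr : 0 < r) (hball : Metric.ball ϱ r ⊆ UH) (a : ℝ) (h : ℂ → ℂ)
    (hh : DifferentiableOn ℂ h (Metric.ball ϱ r)) (A B C : ℝ)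
    (hD : 0 < B ^ 2 - 4 * A * C) (ε : ℝ) (hε0 : 0 < ε) (hεr : ε < r) :
    (Complex.I ^ (k - 1) *
      ∮ z in C(ϱ, ε), ((a : ℂ) * polePart k ϱ z + h z) *
        ((A : ℂ) * z ^ 2 + (B : ℂ) * z + (C : ℂ)) ^ (k - 1)).re = 0 := by
  have hη : 0 < ϱ.im := hϱ
  have hcb : closedBall ϱ ε ⊆ ball ϱ r := closedBall_subset_ball hεr
  have hb : ∀ z ∈ closedBall ϱ ε, z - conj ϱ ≠ 0 := by
    intro z hz h0
    have h1 : 0 < z.im := hball (hcb hz)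
    have h2 := congrArg Complex.im h0
    simp at h2
    linarith
  have hu : ∀ z ∈ sphere ϱ ε, z - ϱ ≠ 0 := fun z hz h0 => by
    rw [mem_sphere, dist_eq, h0] at hz; simp at hz; linarith
  have hδ : ϱ - conj ϱ ≠ 0 := hb ϱ (mem_closedBall_self hε0.le)
  have hδ2 : ϱ - conj ϱ = ((2 * ϱ.im : ℝ) : ℂ) * I := by
    rw [Complex.sub_conj]
  obtain ⟨n, rfl⟩ : ∃ n, k = n + 1 := ⟨k - 1, by omega⟩
  simp only [Nat.add_sub_cancel]
  set α : ℂ := A * ϱ ^ 2 + B * ϱ + C with hα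
  obtain ⟨β, hβ⟩ : ∃ β : ℝ, (β : ℂ) = -(2 * A * (ϱ * conj ϱ) + B * (ϱ + conj ϱ) + 2 * C) := by
    refine ⟨-(2 * A * normSq ϱ + B * (2 * ϱ.re) + 2 * C), ?_⟩
    rw [Complex.mul_conj, Complex.add_conj]
    push_cast
    ring
  obtain ⟨hdeg, c, hc⟩ := aux_coeff_real α β n
  set p : Polynomial ℂ := Polynomial.C α + Polynomial.C (β:ℂ) * Polynomial.X
      + Polynomial.C (conj α) * Polynomial.X ^ 2 with hp
  have hαc : conj α = A * (conj ϱ) ^ 2 + B * conj ϱ + C := by simp [hα]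
  have key : ∀ z ∈ sphere ϱ ε,
      ((a : ℂ) * polePart (n + 1) ϱ z + h z) * ((A : ℂ) * z ^ 2 + (B : ℂ) * z + (C : ℂ)) ^ n
      = (∑ j ∈ Finset.range (2 * n + 1), (a * (ϱ - conj ϱ) / (ϱ - conj ϱ) ^ n * (p ^ n).coeff j) *
        (((z - ϱ) / (z - conj ϱ)) ^ (((j : ℤ) - n) - 1) * ((z - conj ϱ) ^ 2)⁻¹))
        + h z * ((A : ℂ) * z ^ 2 + (B : ℂ) * z + (C : ℂ)) ^ n := by
    intro z hz
    have h1 := hb z (sphere_subset_closedBall hz)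
    have h2 := hu z hz
    rw [add_mul]
    congr 1
    have hQ : (A : ℂ) * z ^ 2 + (B : ℂ) * z + (C : ℂ) = (z - conj ϱ) ^ 2 / (ϱ - conj ϱ) ^ 2 *
        p.eval ((z - ϱ) / (z - conj ϱ)) := by
      simp only [hp, Polynomial.eval_add, Polynomial.eval_mul, Polynomial.eval_C,
        Polynomial.eval_X, Polynomial.eval_pow]
      rw [hαc, hα, hβ]
      generalize conj ϱ = σ at *
      field_simp
      ring
    have hP := Polynomial.eval_eq_sum_range' (p := p ^ n) (n := 2 * n + 1) (by omega)
      ((z - ϱ) / (z - conj ϱ))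
    have hw : (z - ϱ) / (z - conj ϱ) ≠ 0 := div_ne_zero h2 h1
    have hS : (∑ j ∈ Finset.range (2 * n + 1),
        (a * (ϱ - conj ϱ) / (ϱ - conj ϱ) ^ n * (p ^ n).coeff j) *
        (((z - ϱ) / (z - conj ϱ)) ^ (((j : ℤ) - n) - 1) * ((z - conj ϱ) ^ 2)⁻¹))
        = a * (ϱ - conj ϱ) / (ϱ - conj ϱ) ^ n * ((z - conj ϱ) ^ 2)⁻¹ *
          (((z - ϱ) / (z - conj ϱ)) ^ (n + 1))⁻¹ *
          (p ^ n).eval ((z - ϱ) / (z - conj ϱ)) := by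
      rw [hP, Finset.mul_sum]
      refine Finset.sum_congr rfl fun j _ => ?_
      rw [show ((j : ℤ) - n) - 1 = (j : ℤ) - ((n + 1 : ℕ) : ℤ) by push_cast; ring,
        zpow_sub₀ hw, zpow_natCast, zpow_natCast, div_eq_mul_inv (_ ^ j)]
      ring
    rw [hS, hQ, mul_pow, Polynomial.eval_pow, polePart, zpow_neg, zpow_natCast]
    generalize Polynomial.eval ((z - ϱ) / (z - conj ϱ)) p ^ n = E
    generalize conj ϱ = σ at *
    simp only [div_pow, mul_pow]
    field_simp
    generalize z - σ = v
    generalize ϱ - σ = d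
    ring
  rw [circleIntegral.integral_congr hε0.le key]
  have hcontz : ∀ m : ℤ, ContinuousOn (fun z : ℂ => ((z - ϱ) / (z - conj ϱ)) ^ (m - 1)
      * ((z - conj ϱ) ^ 2)⁻¹) (sphere ϱ ε) := by
    intro m z hz
    have h1 := hb z (sphere_subset_closedBall hz)
    have h2 := hu z hz
    apply ContinuousAt.continuousWithinAt
    refine ContinuousAt.mul (ContinuousAt.zpow₀ ?_ _ (Or.inl (div_ne_zero h2 h1))) ?_
    · exact ContinuousAt.div (by fun_prop) (by fun_prop) h1
    · exact ContinuousAt.inv₀ (by fun_prop) (pow_ne_zero _ h1)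
  have hI : ∀ j ∈ Finset.range (2 * n + 1), CircleIntegrable (fun z : ℂ =>
      (a * (ϱ - conj ϱ) / (ϱ - conj ϱ) ^ n * (p ^ n).coeff j) *
        (((z - ϱ) / (z - conj ϱ)) ^ (((j : ℤ) - n) - 1) * ((z - conj ϱ) ^ 2)⁻¹)) ϱ ε := fun j _ =>
    (continuousOn_const.mul (hcontz _)).circleIntegrable hε0.le
  have hdh : DifferentiableOn ℂ (fun z => h z * ((A : ℂ) * z ^ 2 + (B : ℂ) * z + (C : ℂ)) ^ n)
      (ball ϱ r) := hh.mul (by fun_prop)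
  have hH0 : (∮ z in C(ϱ, ε), h z * ((A : ℂ) * z ^ 2 + (B : ℂ) * z + (C : ℂ)) ^ n) = 0 := by
    refine Complex.circleIntegral_eq_zero_of_differentiable_on_off_countable hε0.le
      countable_empty (hdh.continuousOn.mono hcb) fun z hz => ?_
    exact hdh.differentiableAt (isOpen_ball.mem_nhds (hcb (ball_subset_closedBall hz.1)))
  rw [circleIntegral.integral_add, hH0, add_zero, circleIntegral.integral_fun_sum hI]
  rotate_left
  · exact CircleIntegrable.fun_sum _ hI
  · exact ((hdh.continuousOn.mono hcb).mono sphere_subset_closedBall).circleIntegrable hε0.le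
  simp only [circleIntegral.integral_const_mul, aux_int ϱ hη ε hε0 hb]
  rw [Finset.sum_eq_single n]
  · rw [if_pos (sub_self _), hc]
    have : I ^ n * (↑a * (ϱ - conj ϱ) / (ϱ - conj ϱ) ^ n * (c : ℂ) *
        (2 * Real.pi * I / (ϱ - conj ϱ))) =
        ((a * c * (2 * Real.pi) / (2 * ϱ.im) ^ n : ℝ) : ℂ) * I := by
      have e : (((2 * ϱ.im : ℝ) : ℂ)) ≠ 0 := by
        exact_mod_cast (by positivity : (2 * ϱ.im) ≠ 0)
      rw [hδ2, mul_pow]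
      push_cast at e ⊢
      have hI0 := I_ne_zero
      have hη' : (ϱ.im : ℂ) ≠ 0 := by exact_mod_cast hη.ne'
      field_simp
    rw [this, Complex.re_ofReal_mul, Complex.I_re, mul_zero]
  · intro j _ hj
    rw [if_neg (by omega), mul_zero]
  · intro hn
    simp at hn
    omega
end
end

section
/- Let k ≥ 1 be an integer, let A, B, C ∈ ℝ with B² − 4AC > 0, and let ϱ ∈ ℍ. Then the value (R_{2−2k}^{k−1} g)(ϱ) of the (k−1)-fold iterated Maass raising operator applied to the function g(z) := (Az² + Bz + C)^{k−1}, evaluated at z = ϱ, is a real number. -/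
open Complex ComplexConjugate Metric Set MeasureTheory

noncomputable section

/-- The Wirtinger derivative `∂f/∂z = (1/2)(∂f/∂x − i·∂f/∂y)`. -/
def dz (f : ℂ → ℂ) (z : ℂ) : ℂ :=
  (1 / 2 : ℂ) * (fderiv ℝ f z 1 - Complex.I * fderiv ℝ f z Complex.I)

/-- The Maass raising operator `R_κ f = 2i·∂f/∂z + (κ/y)·f`. -/
def raise (κ : ℝ) (f : ℂ → ℂ) : ℂ → ℂ :=
  fun z => 2 * Complex.I * dz f z + ((κ / z.im : ℝ) : ℂ) * f z

/-- The iterated raising operator `R_κⁿ = R_{κ+2n−2} ∘ ⋯ ∘ R_{κ+2} ∘ R_κ`. -/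
def raiseIter (κ : ℝ) : ℕ → (ℂ → ℂ) → (ℂ → ℂ)
  | 0 => fun f => f
  | n + 1 => fun f => raise (κ + 2 * n) (raiseIter κ n f)

def HasDz (f : ℂ → ℂ) (d z : ℂ) : Prop := DifferentiableAt ℝ f z ∧ dz f z = d

lemma HasDz.cast {f : ℂ → ℂ} {d e z : ℂ} (h : HasDz f d z) (he : d = e) : HasDz f e z := he ▸ h

lemma HasDz.comp {g f : ℂ → ℂ} {d e z : ℂ} (hg : HasDerivAt g e (f z)) (hf : HasDz f d z) :
    HasDz (fun z => g (f z)) (e * d) z := by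
  have h1 := (hg.hasFDerivAt.restrictScalars ℝ).comp z hf.1.hasFDerivAt
  refine ⟨h1.differentiableAt, ?_⟩
  have h2 : fderiv ℝ (fun z => g (f z)) z = _ := h1.fderiv
  rw [← hf.2]
  unfold dz
  rw [h2]
  simp
  ring

lemma HasDz.mul {g f : ℂ → ℂ} {d e z : ℂ} (hf : HasDz f d z) (hg : HasDz g e z) :
    HasDz (fun z => f z * g z) (d * g z + f z * e) z := by
  have h1 := hf.1.hasFDerivAt.mul hg.1.hasFDerivAt
  refine ⟨h1.differentiableAt, ?_⟩
  have h2 : fderiv ℝ (fun z => f z * g z) z = _ := h1.fderiv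
  rw [← hf.2, ← hg.2]
  unfold dz
  rw [h2]
  simp
  ring

lemma HasDz.add {g f : ℂ → ℂ} {d e z : ℂ} (hf : HasDz f d z) (hg : HasDz g e z) :
    HasDz (fun z => f z + g z) (d + e) z := by
  have h1 := hf.1.hasFDerivAt.add hg.1.hasFDerivAt
  refine ⟨h1.differentiableAt, ?_⟩
  have h2 : fderiv ℝ (fun z => f z + g z) z = _ := h1.fderiv
  rw [← hf.2, ← hg.2]
  unfold dz
  rw [h2]
  simp
  ring

lemma hasDz_id (z : ℂ) : HasDz (fun z => z) 1 z := by
  refine ⟨differentiableAt_id, ?_⟩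
  unfold dz
  rw [show (fun z : ℂ => z) = id from rfl, fderiv_id]
  simp
  norm_num

lemma hasDz_conj (z : ℂ) : HasDz (fun z => conj z) 0 z := by
  have h : HasFDerivAt (fun z => conj z) (Complex.conjCLE : ℂ →L[ℝ] ℂ) z :=
    Complex.conjCLE.hasFDerivAt
  refine ⟨h.differentiableAt, ?_⟩
  unfold dz
  rw [h.fderiv]
  simp

lemma hasDz_const (c z : ℂ) : HasDz (fun _ => c) 0 z := by
  refine ⟨differentiableAt_const c, ?_⟩
  unfold dz
  simp

lemma HasDz.of_holo {g : ℂ → ℂ} {e z : ℂ} (hg : HasDerivAt g e z) : HasDz g e z := by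
  simpa using HasDz.comp (f := fun z => z) hg (hasDz_id z)

/-- complexified imaginary part -/
def yy (z : ℂ) : ℂ := (z + -1 * conj z) * (-I / 2)

lemma yy_eq (z : ℂ) : yy z = (z.im : ℂ) := by
  apply Complex.ext <;> simp [yy]
  ring

lemma hasDz_yy (z : ℂ) : HasDz yy (-I / 2) z := by
  have := ((hasDz_id z).add ((hasDz_const (-1) z).mul (hasDz_conj z))).mul (hasDz_const (-I/2) z)
  refine HasDz.cast (f := yy) this ?_
  ring

def ww (A B C : ℝ) (z : ℂ) : ℂ :=
  ((A : ℂ) * (z * conj z) + ((B / 2 : ℝ) : ℂ) * (z + conj z) + C) * (yy z)⁻¹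

lemma ww_eq (A B C : ℝ) (z : ℂ) :
    ww A B C z = (((A * Complex.normSq z + B * z.re + C) / z.im : ℝ) : ℂ) := by
  rw [ww, yy_eq, Complex.mul_conj, Complex.add_conj]
  push_cast
  ring

lemma hasDz_ww (A B C : ℝ) (z : ℂ) (hz : yy z ≠ 0) :
    HasDz (ww A B C) (I / 2 * ((A : ℂ) * (conj z) ^ 2 + B * conj z + C) / (yy z) ^ 2) z := by
  have h := ((((hasDz_const A z).mul ((hasDz_id z).mul (hasDz_conj z))).add
    ((hasDz_const ((B/2 : ℝ) : ℂ) z).mul ((hasDz_id z).add (hasDz_conj z)))).add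
    (hasDz_const C z)).mul (HasDz.comp (hasDerivAt_inv hz) (hasDz_yy z))
  refine HasDz.cast (f := ww A B C) h ?_
  have hI : I ^ 2 = -1 := Complex.I_sq
  have hzc : z = conj z + 2 * I * yy z := by
    simp only [yy]; linear_combination (z - conj z) * hI
  push_cast
  field_simp
  generalize yy z = y at *
  generalize conj z = c at *
  subst hzc
  ring_nf
  simp only [hI]
  ring

lemma raise_step (A B C : ℝ) (j : ℕ) (p : Polynomial ℝ) (f : ℂ → ℂ) (κ : ℝ) (hκ : κ = -2 * (j + 1))
    (hf : ∀ z ∈ UH, f z = ((A : ℂ) * z ^ 2 + B * z + C) ^ (j + 1) *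
      (p.map Complex.ofRealHom).eval (ww A B C z)) (z : ℂ) (hz : z ∈ UH) :
    raise κ f z = ((A : ℂ) * z ^ 2 + B * z + C) ^ j *
      ((Polynomial.C (-2 * ((j : ℝ) + 1)) * Polynomial.X * p
        - (Polynomial.X ^ 2 + Polynomial.C (B ^ 2 - 4 * A * C)) * p.derivative).map
          Complex.ofRealHom).eval (ww A B C z) := by
  have hy : yy z ≠ 0 := by
    rw [yy_eq]; exact_mod_cast (ne_of_gt hz)
  have hQ : HasDerivAt (fun z : ℂ => (A : ℂ) * z ^ 2 + B * z + C) (2 * A * z + B) z := by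
    have := ((((hasDerivAt_id z).pow 2).const_mul (A : ℂ)).add
      ((hasDerivAt_id z).const_mul (B : ℂ))).add_const (C : ℂ)
    refine HasDerivAt.congr_deriv (f := fun z : ℂ => (A : ℂ) * z ^ 2 + B * z + C) this ?_
    simp; ring
  have hQj := HasDz.of_holo (hQ.pow (j + 1))
  have hp := HasDz.comp ((p.map Complex.ofRealHom).hasDerivAt (ww A B C z)) (hasDz_ww A B C z hy)
  have hm := (hQj.mul hp).2
  have hop : IsOpen UH := isOpen_lt continuous_const Complex.continuous_im
  have heq : f =ᶠ[nhds z] fun z => ((A : ℂ) * z ^ 2 + B * z + C) ^ (j + 1) *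
      (p.map Complex.ofRealHom).eval (ww A B C z) :=
    Filter.eventually_of_mem (hop.mem_nhds hz) hf
  have hd := hm
  have hd0 : dz f z = dz (fun z => ((A : ℂ) * z ^ 2 + B * z + C) ^ (j + 1) *
      (p.map Complex.ofRealHom).eval (ww A B C z)) z := by
    unfold dz; rw [heq.fderiv_eq]
  replace hd := hd0.trans hm
  unfold raise
  rw [hd, hf z hz, Complex.ofReal_div, ← yy_eq, hκ]
  simp only [Polynomial.map_sub, Polynomial.map_mul, Polynomial.map_add, Polynomial.map_pow,
    Polynomial.map_C, Polynomial.map_X, Polynomial.eval_sub, Polynomial.eval_mul,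
    Polynomial.eval_add, Polynomial.eval_pow, Polynomial.eval_C, Polynomial.eval_X,
    Polynomial.derivative_map, Complex.ofRealHom_eq_coe]
  generalize (Polynomial.map Complex.ofRealHom p).eval (ww A B C z) = P
  generalize (Polynomial.map Complex.ofRealHom p.derivative).eval (ww A B C z) = P'
  have hI : I ^ 2 = -1 := Complex.I_sq
  have hzc : z = conj z + 2 * I * yy z := by
    simp only [yy]; linear_combination (z - conj z) * hI
  have e1 : 2 * I * (2 * A * z + B) - 2 * ((A : ℂ) * z ^ 2 + B * z + C) / yy z
      = -2 * ww A B C z := by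
    simp only [ww]
    push_cast
    field_simp
    generalize yy z = y at *
    generalize conj z = c at *
    subst hzc
    ring
  have e2 : ((A : ℂ) * z ^ 2 + B * z + C) * ((A : ℂ) * (conj z) ^ 2 + B * conj z + C) / (yy z) ^ 2
      = ww A B C z ^ 2 + (B ^ 2 - 4 * A * C) := by
    simp only [ww]
    push_cast
    field_simp
    generalize yy z = y at *
    generalize conj z = c at *
    subst hzc
    ring_nf
    simp only [hI, show I ^ 3 = -I by rw [pow_succ, hI]; ring]
    ring
  push_cast
  simp only [Nat.add_sub_cancel, Pi.pow_apply]
  generalize ww A B C z = w at *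
  generalize (A : ℂ) * (conj z) ^ 2 + B * conj z + C = Qb at *
  generalize hq : (A : ℂ) * z ^ 2 + B * z + C = Q at *
  linear_combination (j + 1) * Q ^ j * P * e1 - Q ^ j * P' * e2 +
    Q ^ (j + 1) * P' * Qb / (yy z) ^ 2 * hI

/-- For `k ≥ 1`, real `A, B, C` with `B² − 4AC > 0`, and `ϱ` in the upper half-plane,
the value `(R_{2−2k}^{k−1} g)(ϱ)` with `g(z) = (Az² + Bz + C)^(k−1)` is a real number. -/
theorem raiseIter_quadratic_real (k : ℕ) (hk : 1 ≤ k) (A B C : ℝ)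
    (hD : 0 < B ^ 2 - 4 * A * C) (ϱ : ℂ) (hϱ : ϱ ∈ UH) :
    (raiseIter ((2 : ℝ) - 2 * k) (k - 1)
      (fun z => ((A : ℂ) * z ^ 2 + (B : ℂ) * z + (C : ℂ)) ^ (k - 1)) ϱ).im = 0 := by
  obtain ⟨m, rfl⟩ : ∃ m, k = m + 1 := ⟨k - 1, by omega⟩
  simp only [Nat.add_sub_cancel]
  have key : ∀ n j : ℕ, n + j = m → ∃ p : Polynomial ℝ, ∀ z ∈ UH,
      raiseIter ((2 : ℝ) - 2 * ((m + 1 : ℕ) : ℝ)) n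
        (fun z => ((A : ℂ) * z ^ 2 + (B : ℂ) * z + (C : ℂ)) ^ m) z
      = ((A : ℂ) * z ^ 2 + B * z + C) ^ j * (p.map Complex.ofRealHom).eval (ww A B C z) := by
    intro n
    induction n with
    | zero =>
      intro j hj
      refine ⟨1, fun z _ => ?_⟩
      have : j = m := by omega
      simp [raiseIter, this]
    | succ n ih =>
      intro j hj
      obtain ⟨p, hp⟩ := ih (j + 1) (by omega)
      refine ⟨_, fun z hz => raise_step A B C j p _ _ ?_ hp z hz⟩
      rw [← hj]; push_cast; ring
  obtain ⟨p, hp⟩ := key m 0 (by omega)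
  rw [hp ϱ hϱ, ww_eq, pow_zero, one_mul, ← Complex.ofRealHom_eq_coe, Polynomial.eval_map,
    Polynomial.eval₂_at_apply]
  simp
end
end

section
/- Let k ≥ 2 be an integer, ϱ ∈ ℍ, and let γ ∈ SL₂(ℤ) be primitive hyperbolic. Then for every z₀ ∈ ℍ ∖ SL₂(ℤ)ϱ and every piecewise continuously differentiable path σ in ℍ ∖ SL₂(ℤ)ϱ from z₀ to γz₀, one has Re( (i/√(d_γ))^{k−1} ∫_σ η_{k,ϱ}(z)·Q_γ(z,1)^{k−1} dz ) = 0; that is, the pairing of the Petersson Poincaré series η_{k,ϱ} with every closed geodesic on SL₂(ℤ)∖ℍ vanishes. -/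
open Complex ComplexConjugate Metric Set MeasureTheory

noncomputable section

abbrev SL2Z := Matrix.SpecialLinearGroup (Fin 2) ℤ

/-- The Möbius action `γz = (az+b)/(cz+d)` of `SL₂(ℤ)` on the upper half-plane
(written as a map on `ℂ`). -/
def moeb (γ : SL2Z) (z : ℂ) : ℂ :=
  ((γ.1 0 0 : ℂ) * z + (γ.1 0 1 : ℂ)) / ((γ.1 1 0 : ℂ) * z + (γ.1 1 1 : ℂ))

/-- The `SL₂(ℤ)`-orbit of a point `ϱ`. -/
def orbit (ϱ : ℂ) : Set ℂ := {z | ∃ γ : SL2Z, z = moeb γ ϱ}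

/-- `γ ∈ SL₂(ℤ)` is hyperbolic if `|a + d| > 2`. -/
def IsHyperbolic (γ : SL2Z) : Prop := 2 < |γ.1 0 0 + γ.1 1 1|

/-- `γ ∈ SL₂(ℤ)` is primitive if it is not a power `γ₀^m`, `m ≥ 2`, of another element. -/
def IsPrimitive (γ : SL2Z) : Prop := ¬∃ (γ₀ : SL2Z) (m : ℕ), 2 ≤ m ∧ γ = γ₀ ^ m

/-- The binary quadratic form `Q_γ(z,1) = cz² + (d−a)z − b` attached to `γ`. -/
def Qpoly (γ : SL2Z) (z : ℂ) : ℂ :=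
  (γ.1 1 0 : ℂ) * z ^ 2 + ((γ.1 1 1 - γ.1 0 0 : ℤ) : ℂ) * z - (γ.1 0 1 : ℂ)

/-- The discriminant `d_γ = (a+d)² − 4` of `Q_γ`. -/
def discr (γ : SL2Z) : ℝ := ((γ.1 0 0 + γ.1 1 1 : ℤ) : ℝ) ^ 2 - 4

/-- The factor `(i/√(d_γ))^(k−1)` appearing in the geodesic pairing. -/
def geodFactor (k : ℕ) (γ : SL2Z) : ℂ := (Complex.I / (Real.sqrt (discr γ) : ℂ)) ^ (k - 1)

/-- Complex line integral of `f` along the path `σ : [0,1] → ℂ`. -/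
def pathInt (f : ℂ → ℂ) (σ : ℝ → ℂ) : ℂ := ∫ t in (0 : ℝ)..1, f (σ t) * deriv σ t

/-- `σ : [0,1] → ℂ` is a piecewise continuously differentiable path. -/
def PiecewiseC1 (σ : ℝ → ℂ) : Prop :=
  ContinuousOn σ (Set.Icc 0 1) ∧
    ∃ (n : ℕ) (t : ℕ → ℝ), 0 < n ∧ t 0 = 0 ∧ t n = 1 ∧ (∀ i < n, t i ≤ t (i + 1)) ∧
      ∀ i < n, ContDiffOn ℝ 1 σ (Set.Icc (t i) (t (i + 1)))

/-- A single term of the Petersson Poincaré series: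
`((γz − ϱ)(γz − conj ϱ)/(ϱ − conj ϱ))^(−k) · (cz + d)^(−2k)`. -/
def etaTerm (k : ℕ) (ϱ z : ℂ) (γ : SL2Z) : ℂ :=
  ((moeb γ z - ϱ) * (moeb γ z - conj ϱ) / (ϱ - conj ϱ)) ^ (-(k : ℤ)) *
    ((γ.1 1 0 : ℂ) * z + (γ.1 1 1 : ℂ)) ^ (-(2 * k : ℤ))

/-- The Petersson Poincaré series `η_{k,ϱ}(z)`. -/
def etaP (k : ℕ) (ϱ z : ℂ) : ℂ := (1 / 2 : ℂ) * ∑' γ : SL2Z, etaTerm k ϱ z γ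

lemma summable_one_add_sq : Summable (fun n : ℤ => 1 / (1 + (n : ℝ) ^ 2)) := by
  have h : Summable (fun n : ℤ => 1 / (n : ℝ) ^ 2) := Real.summable_one_div_int_pow.2 (by norm_num)
  refine Summable.of_norm_bounded_eventually h ?_
  have : ∀ᶠ n : ℤ in Filter.cofinite, n ≠ 0 := by
    simpa using (Set.finite_singleton (0 : ℤ)).compl_mem_cofinite
  filter_upwards [this] with n hn
  rw [Real.norm_of_nonneg (by positivity)]
  have : (0 : ℝ) < (n : ℝ) ^ 2 := by positivity
  exact one_div_le_one_div_of_le this (by linarith)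

def Nsq (g : SL2Z) : ℝ :=
  (g.1 0 0 : ℝ) ^ 2 + (g.1 0 1 : ℝ) ^ 2 + (g.1 1 0 : ℝ) ^ 2 + (g.1 1 1 : ℝ) ^ 2

lemma det_eq (g : SL2Z) : g.1 0 0 * g.1 1 1 - g.1 0 1 * g.1 1 0 = 1 := by
  have := g.2
  rwa [Matrix.det_fin_two] at this

def enc (g : SL2Z) : ℤ × ℤ × ℤ :=
  (g.1 1 0, g.1 1 1, (g.1 0 0 * g.1 1 0 + g.1 0 1 * g.1 1 1) / (g.1 1 0 ^ 2 + g.1 1 1 ^ 2))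

lemma Npos (g : SL2Z) : 1 ≤ g.1 1 0 ^ 2 + g.1 1 1 ^ 2 := by
  have h := det_eq g
  by_contra hc
  have h1 : g.1 1 0 ^ 2 + g.1 1 1 ^ 2 ≤ 0 := by omega
  have h2 : g.1 1 0 = 0 := by nlinarith [sq_nonneg (g.1 1 0), sq_nonneg (g.1 1 1)]
  have h3 : g.1 1 1 = 0 := by nlinarith [sq_nonneg (g.1 1 0), sq_nonneg (g.1 1 1)]
  rw [h2, h3] at h
  simp at h

lemma enc_inj : Function.Injective enc := by
  intro g g' h
  have e1 := det_eq g
  have e2 := det_eq g'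
  have hN := Npos g
  simp only [enc, Prod.mk.injEq] at h
  obtain ⟨hc, hd, hm⟩ := h
  rw [← hc, ← hd] at hm e2
  have hx : g.1 0 0 - g'.1 0 0 = g.1 1 0 *
      (g.1 0 0 * (g.1 0 1 - g'.1 0 1) - g.1 0 1 * (g.1 0 0 - g'.1 0 0)) := by
    linear_combination (-(g.1 0 0 - g'.1 0 0) + g.1 0 0) * e1 - g.1 0 0 * e2
  have hy : g.1 0 1 - g'.1 0 1 = g.1 1 1 *
      (g.1 0 0 * (g.1 0 1 - g'.1 0 1) - g.1 0 1 * (g.1 0 0 - g'.1 0 0)) := by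
    linear_combination (-(g.1 0 1 - g'.1 0 1) + g.1 0 1) * e1 - g.1 0 1 * e2
  set n := g.1 0 0 * (g.1 0 1 - g'.1 0 1) - g.1 0 1 * (g.1 0 0 - g'.1 0 0) with hn
  have ht : g.1 0 0 * g.1 1 0 + g.1 0 1 * g.1 1 1 =
      (g'.1 0 0 * g.1 1 0 + g'.1 0 1 * g.1 1 1) + n * (g.1 1 0 ^ 2 + g.1 1 1 ^ 2) := by
    linear_combination g.1 1 0 * hx + g.1 1 1 * hy
  rw [ht, Int.add_mul_ediv_right _ _ (by omega)] at hm
  have hn0 : n = 0 := by omega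
  rw [hn0] at hx hy
  ext i j
  fin_cases i <;> fin_cases j <;> simp <;> linarith

set_option maxHeartbeats 1000000 in
lemma summable_Nsq : Summable (fun g : SL2Z => 1 / Nsq g ^ 2) := by
  have h1 := summable_one_add_sq
  have h3 : Summable (fun x : ℤ × ℤ × ℤ => 1 / (1 + (x.1 : ℝ) ^ 2) *
      (1 / (1 + (x.2.1 : ℝ) ^ 2) * (1 / (1 + (x.2.2 : ℝ) ^ 2)))) := by
    refine Summable.mul_of_nonneg h1 (Summable.mul_of_nonneg h1 h1 ?_ ?_) ?_ ?_ <;>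
    · intro x; simp only [Pi.zero_apply]; positivity
  have h4 := (h3.comp_injective enc_inj).mul_left 12
  refine Summable.of_nonneg_of_le (fun g => by positivity) (fun g => ?_) h4
  have e1 : ((g.1 0 0 : ℝ)) * g.1 1 1 - g.1 0 1 * g.1 1 0 = 1 := by exact_mod_cast det_eq g
  have hN : (1 : ℝ) ≤ (g.1 1 0 : ℝ) ^ 2 + (g.1 1 1 : ℝ) ^ 2 := by exact_mod_cast Npos g
  have hNz := Npos g
  simp only [Function.comp, enc]
  set m : ℤ := (g.1 0 0 * g.1 1 0 + g.1 0 1 * g.1 1 1) / (g.1 1 0 ^ 2 + g.1 1 1 ^ 2) with hm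
  have m1 := Int.emod_add_mul_ediv (g.1 0 0 * g.1 1 0 + g.1 0 1 * g.1 1 1)
    (g.1 1 0 ^ 2 + g.1 1 1 ^ 2)
  have m2 := Int.emod_nonneg (g.1 0 0 * g.1 1 0 + g.1 0 1 * g.1 1 1)
    (b := g.1 1 0 ^ 2 + g.1 1 1 ^ 2) (by omega)
  have m3 := Int.emod_lt_of_pos (g.1 0 0 * g.1 1 0 + g.1 0 1 * g.1 1 1)
    (b := g.1 1 0 ^ 2 + g.1 1 1 ^ 2) (by omega)
  rw [← hm] at m1
  set rr := (g.1 0 0 * g.1 1 0 + g.1 0 1 * g.1 1 1) % (g.1 1 0 ^ 2 + g.1 1 1 ^ 2)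
  have m1' : (rr : ℝ) + ((g.1 1 0 : ℝ) ^ 2 + (g.1 1 1 : ℝ) ^ 2) * m =
    (g.1 0 0 : ℝ) * g.1 1 0 + g.1 0 1 * g.1 1 1 := by exact_mod_cast m1
  have m2' : (0 : ℝ) ≤ rr := by exact_mod_cast m2
  have m3' : (rr : ℝ) < (g.1 1 0 : ℝ) ^ 2 + (g.1 1 1 : ℝ) ^ 2 := by exact_mod_cast m3
  unfold Nsq
  clear_value m rr
  generalize (g.1 0 0 : ℝ) = a at *
  generalize (g.1 0 1 : ℝ) = b at *
  generalize (g.1 1 0 : ℝ) = c at *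
  generalize (g.1 1 1 : ℝ) = d at *
  generalize (m : ℝ) = m at *
  generalize (rr : ℝ) = r at *
  have hab : (a ^ 2 + b ^ 2) * (c ^ 2 + d ^ 2) = (r + (c ^ 2 + d ^ 2) * m) ^ 2 + 1 := by
    rw [m1']; linear_combination (a * d - b * c + 1) * e1
  obtain ⟨N, hNe⟩ : ∃ N, N = c ^ 2 + d ^ 2 := ⟨_, rfl⟩
  have hcd : (1 + c ^ 2) * (1 + d ^ 2) ≤ 4 * N ^ 2 := by
    rw [hNe]; nlinarith [sq_nonneg c, sq_nonneg d, mul_nonneg (sq_nonneg c) (sq_nonneg d)]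
  rw [← hNe] at hab hN m3'
  have hS : N * (1 + m ^ 2) ≤ 3 * (a ^ 2 + b ^ 2 + c ^ 2 + d ^ 2) := by
    have : N * (N * (1 + m ^ 2)) ≤ N * (3 * (a ^ 2 + b ^ 2 + c ^ 2 + d ^ 2)) := by
      have : N * (3 * (a ^ 2 + b ^ 2 + c ^ 2 + d ^ 2)) = 3 * ((r + N * m) ^ 2 + 1) + 3 * N ^ 2 := by
        rw [← hab, hNe]; ring
      rw [this]
      nlinarith [sq_nonneg (r + N * m + (r + N * m) - N * m), sq_nonneg (2 * r + N * m)]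
    exact le_of_mul_le_mul_left this (by linarith)
  have hS2 : N * 1 ≤ (a ^ 2 + b ^ 2 + c ^ 2 + d ^ 2) := by
    rw [hNe]; nlinarith [sq_nonneg a, sq_nonneg b]
  have : (1 + c ^ 2) * ((1 + d ^ 2) * (1 + m ^ 2)) ≤ 12 * (a ^ 2 + b ^ 2 + c ^ 2 + d ^ 2) ^ 2 := by
    have h5 : (N * (1 + m ^ 2)) * (N * 1) ≤ (3 * (a ^ 2 + b ^ 2 + c ^ 2 + d ^ 2)) *
      (a ^ 2 + b ^ 2 + c ^ 2 + d ^ 2) := mul_le_mul hS hS2 (by linarith) (by positivity)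
    have h6 := mul_le_mul_of_nonneg_right hcd (by positivity : (0 : ℝ) ≤ 1 + m ^ 2)
    calc _ = (1 + c ^ 2) * (1 + d ^ 2) * (1 + m ^ 2) := by ring
      _ ≤ _ := h6
      _ = 4 * ((N * (1 + m ^ 2)) * (N * 1)) := by ring
      _ ≤ _ := mul_le_mul_of_nonneg_left h5 (by norm_num)
      _ = _ := by ring
  have hp : 0 < a ^ 2 + b ^ 2 + c ^ 2 + d ^ 2 := by linarith
  rw [one_div_mul_one_div, one_div_mul_one_div, mul_one_div, div_le_div_iff₀ (by positivity) (by positivity)]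
  linarith

inductive Good : (ℂ → ℂ) → Prop
  | mono (c : ℂ) (j : ℤ) : Good (fun w => c * w ^ j + conj c * w ^ (-j))
  | add (f g : ℂ → ℂ) : Good f → Good g → Good (fun w => f w + g w)

def hfun (B : ℝ) (C w : ℂ) : ℂ := B + conj C * w + C / w

lemma Good.congr {f g : ℂ → ℂ} (hf : Good f) (h : f = g) : Good g := h ▸ hf

def IsPot (f : ℂ → ℂ) (V : ℂ → ℝ) : Prop :=
  ContinuousOn V {0}ᶜ ∧ (∀ w, ‖w‖ = 1 → V w = 0) ∧
  ∀ (w : ℝ → ℂ) (w' : ℂ) (t : ℝ), HasDerivAt w w' t → w t ≠ 0 →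
    HasDerivAt (fun s => V (w s)) (f (w t) * (w' / w t)).re t

lemma IsPot.congr {f g : ℂ → ℂ} {V : ℂ → ℝ} (hf : IsPot f V) (h : ∀ w, w ≠ 0 → f w = g w) :
    IsPot g V := by
  refine ⟨hf.1, hf.2.1, fun w w' t h1 h2 => ?_⟩
  rw [← h _ h2]
  exact hf.2.2 w w' t h1 h2

/-- multiplication by h preserves Good, up to the value at zero -/
lemma Good.mul_h {f : ℂ → ℂ} (hf : Good f) (B : ℝ) (C : ℂ) :
    ∃ g, Good g ∧ ∀ w, w ≠ 0 → g w = f w * hfun B C w := by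
  induction hf with
  | mono c j =>
    refine ⟨_, ((Good.mono (c * B) j).add _ _ (Good.mono (c * conj C) (j + 1))).add _ _
      (Good.mono (c * C) (j - 1)), fun w hw => ?_⟩
    simp only [hfun, neg_add, neg_sub, map_mul, Complex.conj_ofReal, Complex.conj_conj]
    rw [zpow_add₀ hw, zpow_sub₀ hw, zpow_add₀ hw, sub_eq_add_neg, zpow_add₀ hw]
    simp only [zpow_one, zpow_neg]
    field_simp
    ring
  | add f g _ _ ihf ihg =>
    obtain ⟨f1, h1, h2⟩ := ihf
    obtain ⟨g1, h3, h4⟩ := ihg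
    exact ⟨_, h1.add _ _ h3, fun w hw => by simp only [h2 w hw, h4 w hw]; ring⟩

lemma good_pow (B : ℝ) (C : ℂ) (n : ℕ) :
    ∃ g, Good g ∧ ∀ w, w ≠ 0 → g w = hfun B C w ^ n := by
  induction n with
  | zero =>
    exact ⟨_, Good.mono (1 / 2) 0, fun w hw => by
      rw [map_div₀, map_one, map_ofNat]; norm_num⟩
  | succ n ih =>
    obtain ⟨g, h1, h2⟩ := ih
    obtain ⟨g', h3, h4⟩ := h1.mul_h B C
    exact ⟨g', h3, fun w hw => by rw [h4 w hw, h2 w hw, pow_succ]⟩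

lemma re_hasDerivAt {f : ℝ → ℂ} {f' : ℂ} {t : ℝ} (h : HasDerivAt f f' t) :
    HasDerivAt (fun s => (f s).re) f'.re t :=
  (Complex.reCLM.hasFDerivAt (x := f t)).comp_hasDerivAt t h

lemma im_hasDerivAt {f : ℝ → ℂ} {f' : ℂ} {t : ℝ} (h : HasDerivAt f f' t) :
    HasDerivAt (fun s => (f s).im) f'.im t :=
  (Complex.imCLM.hasFDerivAt (x := f t)).comp_hasDerivAt t h

lemma Good.pot {f : ℂ → ℂ} (hf : Good f) : ∃ V, IsPot f V := by
  induction hf with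
  | mono c j =>
    by_cases hj : j = 0
    · subst hj
      refine ⟨fun w => c.re * Real.log (Complex.normSq w), ?_, ?_, ?_⟩
      · refine continuousOn_const.mul (ContinuousOn.log Complex.continuous_normSq.continuousOn ?_)
        intro x hx
        simpa using hx
      · intro w hw
        simp [Complex.normSq_eq_norm_sq, hw]
      · intro w w' t h1 h2
        have h3 : Complex.normSq (w t) ≠ 0 := by simpa using h2
        have hr := re_hasDerivAt h1
        have hi := im_hasDerivAt h1
        have := ((hr.mul hr).add (hi.mul hi)).log h3
        refine (this.const_mul c.re).congr_deriv ?_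
        have e : c * w t ^ (0 : ℤ) + conj c * w t ^ (-(0 : ℤ)) = ((2 * c.re : ℝ) : ℂ) := by
          simp [Complex.add_conj]
        beta_reduce
        rw [e, Complex.re_ofReal_mul, Complex.div_re]
        simp only [Pi.add_apply, Pi.mul_apply]
        have e2 : (w t).re * (w t).re + (w t).im * (w t).im = Complex.normSq (w t) := by
          rw [Complex.normSq_apply]
        rw [e2]
        field_simp
        ring
    · have hj' : (j : ℂ) ≠ 0 := by exact_mod_cast hj
      refine ⟨fun w => (c * w ^ j / j - conj c * w ^ (-j) / j).re, ?_, ?_, ?_⟩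
      · refine Complex.continuous_re.comp_continuousOn ?_
        refine ContinuousOn.sub ?_ ?_
        · refine (continuousOn_const.mul ?_).div_const _
          exact continuousOn_id.zpow₀ _ (fun a ha => Or.inl (by simpa using ha))
        · refine (continuousOn_const.mul ?_).div_const _
          exact continuousOn_id.zpow₀ _ (fun a ha => Or.inl (by simpa using ha))
      · intro w hw
        have e : w ^ (-j) = conj (w ^ j) := by
          rw [map_zpow₀, ← Complex.inv_eq_conj hw, zpow_neg, inv_zpow]
        have e3 : conj (j : ℂ) = j := by simp
        have e2 : c * w ^ j / j - conj c * w ^ (-j) / j =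
          c * w ^ j / j - conj (c * w ^ j / j) := by
          rw [map_div₀, map_mul, e, e3]
        simp only [e2]
        rw [Complex.sub_re, Complex.conj_re, sub_self]
      · intro w w' t h1 h2
        have d1 := (hasDerivAt_zpow j (w t) (Or.inl h2)).comp t h1
        have d2 := (hasDerivAt_zpow (-j) (w t) (Or.inl h2)).comp t h1
        have := ((d1.const_mul c).div_const (j : ℂ)).sub
          ((d2.const_mul (conj c)).div_const (j : ℂ))
        refine (re_hasDerivAt this).congr_deriv ?_
        congr 1
        rw [zpow_sub_one₀ h2, zpow_sub_one₀ h2]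
        push_cast
        field_simp
        ring
  | add f g _ _ ihf ihg =>
    obtain ⟨V, h1, h2, h3⟩ := ihf
    obtain ⟨W, h4, h5, h6⟩ := ihg
    refine ⟨fun w => V w + W w, h1.add h4, fun w hw => by simp [h2 w hw, h5 w hw], ?_⟩
    intro w w' t h7 h8
    refine ((h3 w w' t h7 h8).add (h6 w w' t h7 h8)).congr_deriv ?_
    rw [← Complex.add_re, add_mul]

lemma exists_pot (n : ℕ) (B : ℝ) (C : ℂ) : ∃ V, IsPot (fun w => hfun B C w ^ n) V := by
  obtain ⟨g, h1, h2⟩ := good_pow B C n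
  obtain ⟨V, hV⟩ := h1.pot
  exact ⟨V, hV.congr h2⟩

lemma pot_bound {f : ℂ → ℂ} {V : ℂ → ℝ} (hV : IsPot f V) (w : ℂ) (hw0 : 1 / 2 ≤ ‖w‖)
    (hw1 : ‖w‖ < 1) (M : ℝ)
    (hM : ∀ s ∈ Set.Icc ‖w‖ 1, ‖f ((s : ℂ) * (w / ‖w‖))‖ ≤ M) :
    |V w| ≤ 2 * M * (1 - ‖w‖ ^ 2) := by
  obtain ⟨_, h2, h3⟩ := hV
  have hr : (‖w‖ : ℂ) ≠ 0 := by
    have : ‖w‖ ≠ 0 := by linarith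
    exact_mod_cast this
  have hw : w ≠ 0 := by
    intro h; rw [h] at hr; simp at hr
  set e := w / ‖w‖ with he
  have he1 : ‖e‖ = 1 := by rw [he, norm_div]; simp [hw]
  have he0 : e ≠ 0 := by intro h; rw [h] at he1; simp at he1
  have hM0 : 0 ≤ M := le_trans (norm_nonneg _) (hM 1 ⟨hw1.le, le_rfl⟩)
  have key := norm_image_sub_le_of_norm_deriv_le_segment' (a := ‖w‖) (b := 1)
    (f := fun s : ℝ => V ((s : ℂ) * e))
    (f' := fun s : ℝ => (f ((s : ℂ) * e) * ((1 * e) / ((s : ℂ) * e))).re) (C := 2 * M) ?_ ?_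
    1 ⟨hw1.le, le_rfl⟩
  · have e1 : (‖w‖ : ℂ) * e = w := by rw [he]; field_simp
    simp only [e1] at key
    rw [h2 _ (by simpa using he1)] at key
    rw [zero_sub, norm_neg, Real.norm_eq_abs] at key
    refine key.trans ?_
    refine mul_le_mul_of_nonneg_left ?_ (by positivity)
    nlinarith
  · intro s hs
    have hs0 : (s : ℂ) ≠ 0 := by
      have : s ≠ 0 := by linarith [hs.1]
      exact_mod_cast this
    exact (h3 (fun s : ℝ => (s : ℂ) * e) (1 * e) s
      ((Complex.ofRealCLM.hasDerivAt (x := s)).mul_const e) (mul_ne_zero hs0 he0)).hasDerivWithinAt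
  · intro s hs
    have hs0 : 1 / 2 ≤ s := by linarith [hs.1]
    have hs0' : (s : ℂ) ≠ 0 := by
      have : s ≠ 0 := by linarith
      exact_mod_cast this
    refine (Complex.abs_re_le_norm _).trans ?_
    have : (1 * e) / ((s : ℂ) * e) = (s : ℂ)⁻¹ := by field_simp
    rw [this, norm_mul, norm_inv, Complex.norm_real, Real.norm_of_nonneg (by linarith), mul_comm]
    have h5 : s⁻¹ ≤ 2 := by rw [inv_le_comm₀ (by linarith) (by norm_num)]; linarith
    exact mul_le_mul h5 (hM s ⟨hs.1, hs.2.le⟩) (norm_nonneg _) (by norm_num)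

set_option maxHeartbeats 1000000 in
lemma h_bound (K D : ℝ) (hK : 0 ≤ K) : ∃ K' : ℝ, 0 ≤ K' ∧ ∀ (B : ℝ) (C w : ℂ), 1 / 2 ≤ ‖w‖ → ‖w‖ < 1 →
    B ^ 2 - 4 * ‖C‖ ^ 2 = D → ‖hfun B C w‖ ≤ K * (1 - ‖w‖ ^ 2) →
    ∀ s ∈ Set.Icc ‖w‖ 1, ‖hfun B C ((s : ℂ) * (w / ‖w‖))‖ ≤ K' * (1 - ‖w‖ ^ 2) := by
  refine ⟨4 * K + Real.sqrt (|D| + 8 * K ^ 2), by positivity, ?_⟩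
  intro B C w hw0 hw1 hD hh
  have hr : (‖w‖ : ℂ) ≠ 0 := by
    have : ‖w‖ ≠ 0 := by linarith
    exact_mod_cast this
  have hw : w ≠ 0 := by
    intro h; rw [h] at hr; simp at hr
  obtain ⟨e, he⟩ : ∃ e, e = w / ‖w‖ := ⟨_, rfl⟩
  have he1 : ‖e‖ = 1 := by rw [he, norm_div]; simp [hw]
  have he0 : e ≠ 0 := by intro h; rw [h] at he1; simp at he1
  have hwe : w = (‖w‖ : ℂ) * e := by rw [he]; field_simp
  rw [← he]
  obtain ⟨r, hr'⟩ : ∃ r, r = ‖w‖ := ⟨_, rfl⟩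
  rw [← hr'] at hw0 hw1 hh hwe ⊢
  obtain ⟨α, β, hαβ⟩ : ∃ α β : ℝ, C = (α + β * I) * e := by
    refine ⟨(C / e).re, (C / e).im, ?_⟩
    rw [Complex.re_add_im]; field_simp
  have hee : conj e * e = 1 := by
    rw [mul_comm, Complex.mul_conj, Complex.normSq_eq_norm_sq, he1]; simp
  have hform : ∀ s : ℝ, s ≠ 0 → hfun B C ((s : ℂ) * e) =
      ((B + α * (s + 1 / s) : ℝ) : ℂ) + ((β * (1 / s - s) : ℝ) : ℂ) * I := by
    intro s hs
    have hs' : (s : ℂ) ≠ 0 := by exact_mod_cast hs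
    unfold hfun
    rw [hαβ]
    have e1 : conj ((α + β * I) * e) * ((s : ℂ) * e) = (α - β * I) * s := by
      simp only [map_mul, map_add, Complex.conj_ofReal, Complex.conj_I]
      linear_combination (α - β * I) * s * hee
    have e2 : (α + β * I) * e / ((s : ℂ) * e) = (α + β * I) / s := by field_simp
    rw [e1, e2]
    push_cast
    field_simp
    ring
  have hC : ‖C‖ ^ 2 = α ^ 2 + β ^ 2 := by
    rw [hαβ, norm_mul, he1, mul_one, ← Complex.normSq_eq_norm_sq, Complex.normSq_add_mul_I]
  rw [hC] at hD
  have hh : ‖hfun B C ((r : ℂ) * e)‖ ≤ K * (1 - r ^ 2) := by rw [← hwe]; exact hh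
  rw [hform r (by linarith)] at hh
  have hE := (Complex.abs_re_le_norm _).trans hh
  have hF := (Complex.abs_im_le_norm _).trans hh
  have s1 : ∀ x y : ℝ, ((x : ℂ) + (y : ℂ) * I).re = x := by intros; simp
  have s2 : ∀ x y : ℝ, ((x : ℂ) + (y : ℂ) * I).im = y := by intros; simp
  rw [s1] at hE
  rw [s2] at hF
  clear hh
  have r0 : 0 < r := by linarith
  obtain ⟨δ, hδ⟩ : ∃ δ, δ = 1 - r ^ 2 := ⟨_, rfl⟩
  have δ0 : 0 < δ := by rw [hδ]; nlinarith
  have eδ : 1 / r - r = δ / r := by rw [hδ]; field_simp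
  rw [← hδ] at hE hF ⊢
  rw [eδ] at hF
  have hβ : |β| ≤ K := by
    rw [abs_mul, abs_of_pos (div_pos δ0 r0)] at hF
    have h1 : |β| * δ ≤ |β| * (δ / r) := by
      refine mul_le_mul_of_nonneg_left ?_ (abs_nonneg _)
      rw [le_div_iff₀ r0]; nlinarith
    exact le_of_mul_le_mul_right (h1.trans hF) δ0
  obtain ⟨E, hEe⟩ : ∃ E, E = B + α * (r + 1 / r) := ⟨_, rfl⟩
  rw [← hEe] at hE
  obtain ⟨X, hX⟩ : ∃ X, X = α * (δ / r) := ⟨_, rfl⟩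
  obtain ⟨κ, hκ⟩ : ∃ κ, κ = E * (1 + r ^ 2) / δ := ⟨_, rfl⟩
  have hκK : |κ| ≤ 2 * K := by
    rw [hκ, abs_div, abs_of_pos δ0, div_le_iff₀ δ0, abs_mul, abs_of_pos (by positivity : 0 < 1 + r ^ 2)]
    nlinarith [abs_nonneg E]
  have hquad : (X - κ) ^ 2 = D + 4 * β ^ 2 - E ^ 2 + κ ^ 2 := by
    have hB : B = E - α * (r + 1 / r) := by rw [hEe]; ring
    have h1 : κ * X = E * α * (r + 1 / r) := by
      rw [hκ, hX]; field_simp; ring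
    have h2 : X ^ 2 = α ^ 2 * ((r + 1 / r) ^ 2 - 4) := by
      rw [hX, hδ]; field_simp; ring
    rw [← hD, hB]
    linear_combination (-2) * h1 + h2
  have hXb : |X| ≤ 2 * K + Real.sqrt (|D| + 8 * K ^ 2) := by
    have h1 : |X - κ| ≤ Real.sqrt (|D| + 8 * K ^ 2) := by
      refine Real.abs_le_sqrt ?_
      rw [hquad]
      have := le_abs_self D
      have b2 : β ^ 2 ≤ K ^ 2 := sq_le_sq' (by linarith [abs_le.1 hβ]) (abs_le.1 hβ).2
      have b3 : κ ^ 2 ≤ (2 * K) ^ 2 := sq_le_sq' (by linarith [abs_le.1 hκK]) (abs_le.1 hκK).2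
      nlinarith [sq_nonneg E]
    have h2 : |X| ≤ |X - κ| + |κ| := by
      have := abs_add_le (X - κ) κ
      simpa using this
    linarith
  intro s hs
  have s0 : 0 < s := by linarith [hs.1]
  rw [hform s s0.ne']
  refine (norm_add_le _ _).trans ?_
  rw [norm_mul, Complex.norm_I, mul_one, Complex.norm_real, Complex.norm_real, Real.norm_eq_abs,
    Real.norm_eq_abs]
  have i1 : |β * (1 / s - s)| ≤ K * δ := by
    refine le_trans ?_ hF
    rw [abs_mul, abs_mul]
    refine mul_le_mul_of_nonneg_left ?_ (abs_nonneg _)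
    rw [← eδ]
    have : 1 / s ≤ 1 / r := one_div_le_one_div_of_le r0 hs.1
    have : 1 ≤ 1 / s := by rw [le_div_iff₀ s0]; linarith [hs.2]
    rw [abs_of_nonneg (by linarith [hs.2]), abs_of_nonneg (by linarith [hs.2, hs.1])]
    linarith [hs.1]
  have i2 : |α * ((r + 1 / r) - (s + 1 / s))| ≤ |X| * δ := by
    rw [hX, abs_mul, abs_mul, mul_assoc]
    refine mul_le_mul_of_nonneg_left ?_ (abs_nonneg _)
    rw [abs_of_pos (div_pos δ0 r0)]
    have j1 : (r + 1 / r) - (s + 1 / s) = (s - r) * (1 - r * s) / (r * s) := by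
      field_simp; ring
    have j2 : 0 ≤ (s - r) * (1 - r * s) :=
      mul_nonneg (by linarith [hs.1]) (by nlinarith [hs.1, hs.2])
    rw [j1, abs_of_nonneg (div_nonneg j2 (by positivity)), div_mul_eq_mul_div,
      div_le_div_iff₀ (by positivity) r0]
    have j3 : s - r ≤ s * δ := by
      have : s * r ≤ 1 := mul_le_one₀ hs.2 r0.le hw1.le
      have := mul_le_mul_of_nonneg_right this r0.le
      rw [hδ]; linarith
    have j4 : 1 - r * s ≤ δ := by
      have := mul_le_mul_of_nonneg_left hs.1 r0.le
      rw [hδ]; linarith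
    have := mul_le_mul j3 j4 (sub_nonneg.2 (mul_le_one₀ hw1.le s0.le hs.2)) (by positivity)
    have := mul_le_mul_of_nonneg_right this r0.le
    linarith
  have i3 : B + α * (s + 1 / s) = E - α * ((r + 1 / r) - (s + 1 / s)) := by rw [hEe]; ring
  rw [i3]
  have i4 := abs_sub E (α * ((r + 1 / r) - (s + 1 / s)))
  have := mul_le_mul_of_nonneg_right hXb δ0.le
  linarith

def pf (ϱ z : ℂ) (g : SL2Z) : ℂ :=
  ((g.1 0 0 : ℂ) * z + (g.1 0 1 : ℂ)) - ϱ * ((g.1 1 0 : ℂ) * z + (g.1 1 1 : ℂ))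

def wf (ϱ z : ℂ) (g : SL2Z) : ℂ := pf ϱ z g / pf (conj ϱ) z g

lemma det_eqC (g : SL2Z) : (g.1 0 0 : ℂ) * g.1 1 1 - g.1 0 1 * g.1 1 0 = 1 := by
  exact_mod_cast det_eq g

lemma det_eqR (g : SL2Z) : (g.1 0 0 : ℝ) * g.1 1 1 - g.1 0 1 * g.1 1 0 = 1 := by
  exact_mod_cast det_eq g

lemma norm_pq (ϱ z : ℂ) (g : SL2Z) :
    ‖pf (conj ϱ) z g‖ ^ 2 = ‖pf ϱ z g‖ ^ 2 + 4 * ϱ.im * z.im := by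
  have e := det_eqR g
  rw [← Complex.normSq_eq_norm_sq, ← Complex.normSq_eq_norm_sq, Complex.normSq_apply,
    Complex.normSq_apply]
  simp only [pf, Complex.sub_re, Complex.sub_im, Complex.add_re, Complex.add_im, Complex.mul_re,
    Complex.mul_im, Complex.intCast_re, Complex.intCast_im, Complex.conj_re, Complex.conj_im]
  linear_combination (4 * ϱ.im * z.im) * e

lemma pf_conj_pos {ϱ z : ℂ} (hϱ : 0 < ϱ.im) (hz : 0 < z.im) (g : SL2Z) :
    0 < ‖pf (conj ϱ) z g‖ := by
  have := norm_pq ϱ z g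
  have h2 : 0 < ‖pf (conj ϱ) z g‖ ^ 2 := by rw [this]; positivity
  exact (sq_pos_iff.1 h2).lt_of_le' (norm_nonneg _)

lemma pf_conj_ne {ϱ z : ℂ} (hϱ : 0 < ϱ.im) (hz : 0 < z.im) (g : SL2Z) :
    pf (conj ϱ) z g ≠ 0 := norm_pos_iff.1 (pf_conj_pos hϱ hz g)

lemma norm_wf {ϱ z : ℂ} (hϱ : 0 < ϱ.im) (hz : 0 < z.im) (g : SL2Z) :
    1 - ‖wf ϱ z g‖ ^ 2 = 4 * ϱ.im * z.im / ‖pf (conj ϱ) z g‖ ^ 2 := by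
  have h := pf_conj_pos hϱ hz g
  rw [wf, norm_div, div_pow, eq_div_iff (by positivity), sub_mul,
    div_mul_cancel₀ _ (by positivity), norm_pq]
  ring

lemma norm_wf_lt {ϱ z : ℂ} (hϱ : 0 < ϱ.im) (hz : 0 < z.im) (g : SL2Z) : ‖wf ϱ z g‖ < 1 := by
  have h := norm_wf hϱ hz g
  have h1 := pf_conj_pos hϱ hz g
  have h2 : 0 < 4 * ϱ.im * z.im / ‖pf (conj ϱ) z g‖ ^ 2 := by positivity
  nlinarith [norm_nonneg (wf ϱ z g)]

lemma cd_ne {z : ℂ} (hz : 0 < z.im) (g : SL2Z) : (g.1 1 0 : ℂ) * z + (g.1 1 1 : ℂ) ≠ 0 := by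
  intro h
  have e := det_eqR g
  have h1 := congrArg Complex.im h
  have h2 := congrArg Complex.re h
  simp at h1 h2
  rcases h1 with h1 | h1
  · rw [h1] at h2
    simp at h2
    rw [h1, h2] at e
    simp at e
  · linarith

lemma moeb_sub {ϱ z : ℂ} (hz : 0 < z.im) (g : SL2Z) :
    moeb g z - ϱ = pf ϱ z g / ((g.1 1 0 : ℂ) * z + (g.1 1 1 : ℂ)) := by
  have := cd_ne hz g
  rw [moeb, pf, sub_div, mul_div_cancel_right₀ _ this]

lemma etaTerm_eq {ϱ z : ℂ} (hz : 0 < z.im) (k : ℕ) (g : SL2Z) :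
    etaTerm k ϱ z g = ((ϱ - conj ϱ) / (pf ϱ z g * pf (conj ϱ) z g)) ^ k := by
  have := cd_ne hz g
  rw [etaTerm, moeb_sub hz, moeb_sub hz, zpow_neg, zpow_natCast, zpow_neg]
  have e : ((g.1 1 0 : ℂ) * z + (g.1 1 1 : ℂ)) ^ (2 * k : ℤ) =
    (((g.1 1 0 : ℂ) * z + (g.1 1 1 : ℂ)) ^ 2) ^ k := by
    rw [← pow_mul, ← zpow_natCast]; push_cast; rfl
  rw [e, ← inv_pow, ← inv_pow, ← mul_pow]
  congr 1
  rw [inv_div, ← div_eq_mul_inv, div_mul_div_comm, div_div_eq_mul_div]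
  field_simp

lemma wf_hasDerivAt {ϱ z : ℂ} (hϱ : 0 < ϱ.im) (hz : 0 < z.im) (g : SL2Z) :
    HasDerivAt (fun z => wf ϱ z g) ((ϱ - conj ϱ) / pf (conj ϱ) z g ^ 2) z := by
  have hq := pf_conj_ne hϱ hz g
  have hd : ∀ r : ℂ, HasDerivAt (fun z => pf r z g) ((g.1 0 0 : ℂ) * 1 - r * ((g.1 1 0 : ℂ) * 1)) z := by
    intro r
    exact (((hasDerivAt_id z).const_mul _).add_const _).sub
      ((((hasDerivAt_id z).const_mul _).add_const _).const_mul r)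
  refine ((hd ϱ).div (hd (conj ϱ)) hq).congr_deriv ?_
  congr 1
  have e := det_eqC g
  simp only [pf]
  linear_combination (ϱ - conj ϱ) * e

lemma pf_ne {ϱ z : ℂ} (hϱ : 0 < ϱ.im) (ho : z ∉ orbit ϱ) (g : SL2Z) :
    pf ϱ z g ≠ 0 := by
  intro h
  apply ho
  refine ⟨g⁻¹, ?_⟩
  have h1 := cd_ne hϱ g⁻¹
  rw [moeb, eq_div_iff h1]
  simp only [Matrix.SpecialLinearGroup.coe_inv, Matrix.adjugate_fin_two]
  simp [pf] at h ⊢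
  linear_combination h

lemma wf_ne {ϱ z : ℂ} (hϱ : 0 < ϱ.im) (hz : 0 < z.im) (ho : z ∉ orbit ϱ) (g : SL2Z) :
    wf ϱ z g ≠ 0 := div_ne_zero (pf_ne hϱ ho g) (pf_conj_ne hϱ hz g)

def Bc (ϱ : ℂ) (M : SL2Z) : ℝ := -(-2 * (M.1 1 0 : ℝ) * (ϱ.re ^ 2 + ϱ.im ^ 2)
  - ((M.1 1 1 : ℝ) - M.1 0 0) * (2 * ϱ.re) + 2 * M.1 0 1) / (2 * ϱ.im)

def Cc (ϱ : ℂ) (M : SL2Z) : ℂ := -((M.1 1 0 : ℂ) * ϱ ^ 2 + ((M.1 1 1 : ℂ) - M.1 0 0) * ϱ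
  - M.1 0 1) / (2 * ϱ.im : ℝ)

lemma disc_BC {ϱ : ℂ} (hϱ : 0 < ϱ.im) (M : SL2Z) :
    Bc ϱ M ^ 2 - 4 * ‖Cc ϱ M‖ ^ 2 = 4 - ((M.1 0 0 : ℝ) + M.1 1 1) ^ 2 := by
  have e := det_eqR M
  rw [Cc, norm_div, norm_neg, div_pow, Complex.norm_real, Real.norm_eq_abs, sq_abs,
    ← Complex.normSq_eq_norm_sq, Complex.normSq_apply, Bc]
  simp only [pow_two, Complex.sub_re, Complex.sub_im, Complex.add_re, Complex.add_im, Complex.mul_re,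
    Complex.mul_im, Complex.intCast_re, Complex.intCast_im]
  field_simp
  linear_combination (16 * ϱ.im ^ 2) * e

lemma conj_entries (g γ : SL2Z) : 
    (g * γ * g⁻¹).1 0 0 = (g.1 0 0 * γ.1 0 0 + g.1 0 1 * γ.1 1 0) * g.1 1 1
      - (g.1 0 0 * γ.1 0 1 + g.1 0 1 * γ.1 1 1) * g.1 1 0 ∧
    (g * γ * g⁻¹).1 0 1 = -(g.1 0 0 * γ.1 0 0 + g.1 0 1 * γ.1 1 0) * g.1 0 1
      + (g.1 0 0 * γ.1 0 1 + g.1 0 1 * γ.1 1 1) * g.1 0 0 ∧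
    (g * γ * g⁻¹).1 1 0 = (g.1 1 0 * γ.1 0 0 + g.1 1 1 * γ.1 1 0) * g.1 1 1
      - (g.1 1 0 * γ.1 0 1 + g.1 1 1 * γ.1 1 1) * g.1 1 0 ∧
    (g * γ * g⁻¹).1 1 1 = -(g.1 1 0 * γ.1 0 0 + g.1 1 1 * γ.1 1 0) * g.1 0 1
      + (g.1 1 0 * γ.1 0 1 + g.1 1 1 * γ.1 1 1) * g.1 0 0 := by
  simp only [Matrix.SpecialLinearGroup.coe_mul, Matrix.SpecialLinearGroup.coe_inv,
    Matrix.adjugate_fin_two, Matrix.mul_apply, Fin.sum_univ_two]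
  simp
  refine ⟨?_, ?_, ?_, ?_⟩ <;> ring

lemma tr_conj (g γ : SL2Z) : ((g * γ * g⁻¹).1 0 0 : ℝ) + (g * γ * g⁻¹).1 1 1 =
    (γ.1 0 0 : ℝ) + γ.1 1 1 := by
  obtain ⟨h1, h2, h3, h4⟩ := conj_entries g γ
  have e := det_eq g
  have : (g * γ * g⁻¹).1 0 0 + (g * γ * g⁻¹).1 1 1 = γ.1 0 0 + γ.1 1 1 := by
    rw [h1, h4]
    linear_combination (γ.1 0 0 + γ.1 1 1) * e
  exact_mod_cast this

lemma Q_conj (g γ : SL2Z) (z : ℂ) : Qpoly γ z =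
    ((g * γ * g⁻¹).1 1 0 : ℂ) * ((g.1 0 0 : ℂ) * z + (g.1 0 1 : ℂ)) ^ 2 +
    (((g * γ * g⁻¹).1 1 1 : ℂ) - (g * γ * g⁻¹).1 0 0) * ((g.1 0 0 : ℂ) * z + (g.1 0 1 : ℂ)) *
      ((g.1 1 0 : ℂ) * z + (g.1 1 1 : ℂ)) -
    ((g * γ * g⁻¹).1 0 1 : ℂ) * ((g.1 1 0 : ℂ) * z + (g.1 1 1 : ℂ)) ^ 2 := by
  obtain ⟨h1, h2, h3, h4⟩ := conj_entries g γ
  have e := det_eqC g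
  rw [h1, h2, h3, h4, Qpoly]
  push_cast
  linear_combination (-((g.1 0 0 : ℂ) * g.1 1 1 - g.1 0 1 * g.1 1 0 + 1) *
    ((γ.1 1 0 : ℂ) * z ^ 2 + ((γ.1 1 1 : ℂ) - γ.1 0 0) * z - (γ.1 0 1 : ℂ))) * e

lemma key_id {ϱ z : ℂ} (hϱ : 0 < ϱ.im) (hz : 0 < z.im) (g γ : SL2Z) (hp : pf ϱ z g ≠ 0) :
    Qpoly γ z * ((ϱ - conj ϱ) / (pf ϱ z g * pf (conj ϱ) z g)) =
      I * hfun (Bc ϱ (g * γ * g⁻¹)) (Cc ϱ (g * γ * g⁻¹)) (wf ϱ z g) := by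
  have hq := pf_conj_ne hϱ hz g
  rw [Q_conj g γ z]
  generalize g * γ * g⁻¹ = M
  have hy : (ϱ.im : ℂ) ≠ 0 := by exact_mod_cast hϱ.ne'
  have hsub : ϱ - conj ϱ = 2 * ϱ.im * I := by rw [Complex.sub_conj]; push_cast; ring
  have hI := Complex.I_ne_zero
  have hne : ϱ - conj ϱ ≠ 0 := by rw [hsub]; simp [hϱ.ne']
  have hB : I * (Bc ϱ M : ℂ) = (-2 * (M.1 1 0 : ℂ) * (ϱ * conj ϱ)
      - ((M.1 1 1 : ℂ) - M.1 0 0) * (ϱ + conj ϱ) + 2 * M.1 0 1) / (ϱ - conj ϱ) := by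
    rw [hsub, Bc, Complex.mul_conj, Complex.add_conj, Complex.normSq_apply]
    push_cast
    field_simp
    simp only [Complex.I_sq]
    ring
  have hC : I * Cc ϱ M = ((M.1 1 0 : ℂ) * ϱ ^ 2 + ((M.1 1 1 : ℂ) - M.1 0 0) * ϱ
      - M.1 0 1) / (ϱ - conj ϱ) := by
    rw [hsub, Cc]
    push_cast
    field_simp
    simp only [Complex.I_sq]
    ring
  have hC' : I * conj (Cc ϱ M) = ((M.1 1 0 : ℂ) * conj ϱ ^ 2 + ((M.1 1 1 : ℂ) - M.1 0 0) * conj ϱ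
      - M.1 0 1) / (ϱ - conj ϱ) := by
    rw [hsub, Cc]
    simp only [map_div₀, map_neg, map_sub, map_add, map_mul, map_pow, map_intCast, Complex.conj_ofReal]
    push_cast
    field_simp
    simp only [Complex.I_sq]
    ring
  have : I * hfun (Bc ϱ M) (Cc ϱ M) (wf ϱ z g) = I * (Bc ϱ M : ℂ) +
    (I * conj (Cc ϱ M)) * wf ϱ z g + (I * Cc ϱ M) / wf ϱ z g := by
    rw [hfun]; ring
  rw [this, hB, hC, hC', wf, div_div_eq_mul_div]
  clear this hB hC hC' hsub
  field_simp
  simp only [pf]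
  ring

lemma pf_mul {ϱ z : ℂ} (hz : 0 < z.im) (g γ : SL2Z) :
    pf ϱ z (g * γ) = ((γ.1 1 0 : ℂ) * z + (γ.1 1 1 : ℂ)) * pf ϱ (moeb γ z) g := by
  have := cd_ne hz γ
  simp only [pf, moeb, Matrix.SpecialLinearGroup.coe_mul, Matrix.mul_apply, Fin.sum_univ_two]
  push_cast
  field_simp
  ring

lemma wf_mul {ϱ z : ℂ} (hz : 0 < z.im) (g γ : SL2Z) :
    wf ϱ z (g * γ) = wf ϱ (moeb γ z) g := by
  have := cd_ne hz γ
  rw [wf, wf, pf_mul hz, pf_mul hz, mul_div_mul_left _ _ this]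

lemma lin_bound {ε R : ℝ} (hε : 0 < ε) (c d : ℝ) (z : ℂ) (h1 : ε ≤ z.im) (h2 : ‖z‖ ≤ R) :
    |c| ≤ ‖(c : ℂ) * z + d‖ * (1 / ε) ∧ |d| ≤ ‖(c : ℂ) * z + d‖ * (1 + R / ε) := by
  have hc : |c| * ε ≤ ‖(c : ℂ) * z + d‖ := by
    have := Complex.abs_im_le_norm ((c : ℂ) * z + d)
    simp [abs_mul] at this
    have h3 : ε ≤ |z.im| := h1.trans (le_abs_self _)
    exact (mul_le_mul_of_nonneg_left h3 (abs_nonneg c)).trans this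
  have hc' : |c| ≤ ‖(c : ℂ) * z + d‖ * (1 / ε) := by
    rw [mul_one_div, le_div_iff₀ hε]; exact hc
  refine ⟨hc', ?_⟩
  have e : (d : ℂ) = ((c : ℂ) * z + d) - c * z := by ring
  have h3 : |d| ≤ ‖(c : ℂ) * z + d‖ + |c| * ‖z‖ := by
    have := norm_sub_le ((c : ℂ) * z + d) (c * z)
    rw [← e, norm_mul, Complex.norm_real, Complex.norm_real] at this
    simpa using this
  have h4 : |c| * ‖z‖ ≤ (‖(c : ℂ) * z + d‖ * (1 / ε)) * R :=
    mul_le_mul hc' h2 (norm_nonneg _) (by positivity)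
  calc |d| ≤ _ := h3
    _ ≤ ‖(c : ℂ) * z + d‖ + (‖(c : ℂ) * z + d‖ * (1 / ε)) * R := by linarith
    _ = _ := by ring

lemma Nsq_bound {ϱ : ℂ} (hϱ : 0 < ϱ.im) {ε R : ℝ} (hε : 0 < ε) : ∃ C : ℝ, 0 < C ∧ ∀ z : ℂ,
    ε ≤ z.im → ‖z‖ ≤ R → ∀ g, Nsq g ≤ C * ‖pf (conj ϱ) z g‖ ^ 2 := by
  refine ⟨((1 / ε) ^ 2 + (1 + R / ε) ^ 2) * ((‖ϱ‖ / ϱ.im) ^ 2 + (1 / ϱ.im) ^ 2), by positivity, ?_⟩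
  intro z h1 h2 g
  have hz : 0 < z.im := by linarith
  have hpq : ‖pf ϱ z g‖ ≤ ‖pf (conj ϱ) z g‖ := by
    have := norm_pq ϱ z g
    refine le_of_sq_le_sq ?_ (norm_nonneg _)
    rw [this]
    have : 0 ≤ 4 * ϱ.im * z.im := by positivity
    linarith
  obtain ⟨a1, a2⟩ := lin_bound hε (g.1 0 0) (g.1 0 1) z h1 h2
  obtain ⟨b1, b2⟩ := lin_bound hε (g.1 1 0) (g.1 1 1) z h1 h2
  have hsub : ‖ϱ - conj ϱ‖ = 2 * ϱ.im := by
    rw [Complex.sub_conj]; simp [abs_of_pos hϱ]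
  have hA : ‖(((g.1 0 0 : ℝ) : ℂ) * z + ((g.1 0 1 : ℝ) : ℂ))‖ ≤
      ‖ϱ‖ / ϱ.im * ‖pf (conj ϱ) z g‖ := by
    have e : (((g.1 0 0 : ℝ) : ℂ) * z + ((g.1 0 1 : ℝ) : ℂ)) * (ϱ - conj ϱ) =
      ϱ * pf (conj ϱ) z g - conj ϱ * pf ϱ z g := by
      simp only [pf]; push_cast; ring
    have := congrArg norm e
    rw [norm_mul, hsub] at this
    have h4 := norm_sub_le (ϱ * pf (conj ϱ) z g) (conj ϱ * pf ϱ z g)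
    rw [← this, norm_mul, norm_mul, Complex.norm_conj] at h4
    rw [div_mul_eq_mul_div, le_div_iff₀ hϱ]
    nlinarith [mul_le_mul_of_nonneg_left hpq (norm_nonneg ϱ)]
  have hB : ‖(((g.1 1 0 : ℝ) : ℂ) * z + ((g.1 1 1 : ℝ) : ℂ))‖ ≤
      1 / ϱ.im * ‖pf (conj ϱ) z g‖ := by
    have e : (((g.1 1 0 : ℝ) : ℂ) * z + ((g.1 1 1 : ℝ) : ℂ)) * (ϱ - conj ϱ) =
      pf (conj ϱ) z g - pf ϱ z g := by
      simp only [pf]; push_cast; ring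
    have := congrArg norm e
    rw [norm_mul, hsub] at this
    have h4 := norm_sub_le (pf (conj ϱ) z g) (pf ϱ z g)
    rw [← this] at h4
    rw [div_mul_eq_mul_div, le_div_iff₀ hϱ]
    linarith
  have sq : ∀ x y : ℝ, |x| ≤ y → x ^ 2 ≤ y ^ 2 := fun x y h => by
    rw [← sq_abs]; exact pow_le_pow_left₀ (abs_nonneg _) h 2
  have a1 := sq _ _ a1
  have a2 := sq _ _ a2
  have b1 := sq _ _ b1
  have b2 := sq _ _ b2
  have hA := pow_le_pow_left₀ (norm_nonneg _) hA 2
  have hB := pow_le_pow_left₀ (norm_nonneg _) hB 2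
  unfold Nsq
  rw [mul_pow] at a1 a2 b1 b2 hA hB
  have hk : 0 ≤ (1 / ε) ^ 2 + (1 + R / ε) ^ 2 := by positivity
  have hA' := mul_le_mul_of_nonneg_left hA hk
  have hB' := mul_le_mul_of_nonneg_left hB hk
  linarith

lemma ev_Nsq (T : ℝ) : ∀ᶠ g : SL2Z in Filter.cofinite, T ≤ Nsq g ∧ 0 < Nsq g := by
  have h := summable_Nsq.tendsto_cofinite_zero
  have h2 : ∀ᶠ g : SL2Z in Filter.cofinite, 1 / Nsq g ^ 2 < 1 / (T ^ 2 + 1) :=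
    h.eventually (gt_mem_nhds (by positivity))
  filter_upwards [h2] with g hg
  have hN : 0 < Nsq g := by
    have hh : (1 : ℝ) ≤ (g.1 1 0 : ℝ) ^ 2 + (g.1 1 1 : ℝ) ^ 2 := by exact_mod_cast Npos g
    unfold Nsq
    nlinarith [sq_nonneg (g.1 0 0 : ℝ), sq_nonneg (g.1 0 1 : ℝ)]
  have h3 := lt_of_one_div_lt_one_div (by positivity) hg
  exact ⟨le_of_lt (lt_of_pow_lt_pow_left₀ 2 hN.le (by linarith)), hN⟩

/-- uniform estimates -/
lemma unif {ϱ : ℂ} (hϱ : 0 < ϱ.im) {ε R : ℝ} (hε : 0 < ε) (hR : 0 ≤ R) : ∃ T C : ℝ, 0 < C ∧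
    ∀ g : SL2Z, T ≤ Nsq g → 0 < Nsq g → ∀ z : ℂ, ε ≤ z.im → ‖z‖ ≤ R →
      1 / 2 ≤ ‖wf ϱ z g‖ ∧ 1 - ‖wf ϱ z g‖ ^ 2 ≤ C / Nsq g ∧
      ‖(ϱ - conj ϱ) / (pf ϱ z g * pf (conj ϱ) z g)‖ ≤ C / Nsq g ∧ C / Nsq g ≤ 1 := by
  obtain ⟨C, hC, hb⟩ := Nsq_bound hϱ (R := R) hε
  refine ⟨2 * (4 * ϱ.im * (R + 1) * C), 4 * ϱ.im * (R + 1) * C, by positivity, ?_⟩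
  intro g hT hN z h1 h2
  have hz : 0 < z.im := by linarith
  have hq := pf_conj_pos hϱ hz g
  have hbg := hb z h1 h2 g
  have hy : z.im ≤ R := (le_abs_self _).trans ((Complex.abs_im_le_norm z).trans h2)
  have hinv : 1 / ‖pf (conj ϱ) z g‖ ^ 2 ≤ C / Nsq g := by
    rw [div_le_div_iff₀ (by positivity) hN]; linarith
  have e1 := norm_wf hϱ hz g
  have hδ : 1 - ‖wf ϱ z g‖ ^ 2 ≤ 4 * ϱ.im * (R + 1) * C / Nsq g := by
    rw [e1]
    calc 4 * ϱ.im * z.im / ‖pf (conj ϱ) z g‖ ^ 2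
        = 4 * ϱ.im * z.im * (1 / ‖pf (conj ϱ) z g‖ ^ 2) := by ring
      _ ≤ 4 * ϱ.im * (R + 1) * (C / Nsq g) := by
        refine mul_le_mul (mul_le_mul_of_nonneg_left (by linarith) (by positivity)) hinv
          (by positivity) (by positivity)
      _ = _ := by ring
  have hhalf : 4 * ϱ.im * (R + 1) * C / Nsq g ≤ 1 / 2 := by
    rw [div_le_div_iff₀ hN (by norm_num)]; linarith
  have hw : 1 / 2 ≤ ‖wf ϱ z g‖ := by
    by_contra hc
    push Not at hc
    nlinarith [norm_nonneg (wf ϱ z g)]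
  refine ⟨hw, hδ, ?_, by linarith⟩
  have hsub : ‖ϱ - conj ϱ‖ = 2 * ϱ.im := by
    rw [Complex.sub_conj]; simp [abs_of_pos hϱ]
  have e2 : ‖pf ϱ z g‖ = ‖wf ϱ z g‖ * ‖pf (conj ϱ) z g‖ := by
    rw [wf, norm_div]; field_simp
  rw [norm_div, norm_mul, hsub, e2]
  calc 2 * ϱ.im / (‖wf ϱ z g‖ * ‖pf (conj ϱ) z g‖ * ‖pf (conj ϱ) z g‖)
      = 2 * ϱ.im * (1 / ‖wf ϱ z g‖) * (1 / ‖pf (conj ϱ) z g‖ ^ 2) := by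
        have : ‖wf ϱ z g‖ ≠ 0 := by linarith
        field_simp
    _ ≤ 2 * ϱ.im * 2 * (C / Nsq g) := by
        refine mul_le_mul (mul_le_mul_of_nonneg_left ?_ (by positivity)) hinv
          (by positivity) (by positivity)
        rw [div_le_iff₀ (by linarith)]; linarith
    _ ≤ 4 * ϱ.im * (R + 1) * (C / Nsq g) := by
        refine mul_le_mul_of_nonneg_right ?_ (by positivity)
        nlinarith [mul_nonneg hϱ.le hR]
    _ = _ := by ring

def Vpot (n : ℕ) (B : ℝ) (C : ℂ) : ℂ → ℝ := (exists_pot n B C).choose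

lemma Vpot_spec (n : ℕ) (B : ℝ) (C : ℂ) : IsPot (fun w => hfun B C w ^ n) (Vpot n B C) :=
  (exists_pot n B C).choose_spec

def uf (n : ℕ) (ϱ : ℂ) (γ g : SL2Z) (z : ℂ) : ℝ :=
  Vpot n (Bc ϱ (g * γ * g⁻¹)) (Cc ϱ (g * γ * g⁻¹)) (wf ϱ z g)

lemma uf_moeb (n : ℕ) (ϱ : ℂ) (γ g : SL2Z) {z : ℂ} (hz : 0 < z.im) :
    uf n ϱ γ g (moeb γ z) = uf n ϱ γ (g * γ) z := by
  have : g * γ * γ * (g * γ)⁻¹ = g * γ * g⁻¹ := by group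
  rw [uf, uf, this, wf_mul hz]

lemma uf_summable (n : ℕ) (hn : 1 ≤ n) {ϱ : ℂ} (hϱ : 0 < ϱ.im) (γ : SL2Z) {z : ℂ} (hz : 0 < z.im) :
    Summable (fun g => uf n ϱ γ g z) := by
  obtain ⟨T, C, hC, hu⟩ := unif hϱ (R := ‖z‖) hz (norm_nonneg z)
  set K : ℝ := ‖Qpoly γ z‖ / z.im with hK
  have hK0 : 0 ≤ K := by positivity
  obtain ⟨K', hK', hb⟩ := h_bound K (4 - ((γ.1 0 0 : ℝ) + γ.1 1 1) ^ 2) hK0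
  refine Summable.of_norm_bounded_eventually (summable_Nsq.mul_left (2 * K' ^ n * C ^ 2)) ?_
  filter_upwards [ev_Nsq T] with g hg
  obtain ⟨h1, h2, h3, h4⟩ := hu g hg.1 hg.2 z le_rfl le_rfl
  have hw1 := norm_wf_lt hϱ hz g
  have hq := pf_conj_pos hϱ hz g
  set δ := 1 - ‖wf ϱ z g‖ ^ 2 with hδ
  have hδ0 : 0 ≤ δ := by rw [hδ]; nlinarith
  have hp : pf ϱ z g ≠ 0 := by
    intro h
    rw [wf, h] at h1
    norm_num at h1
  have hsub : ‖ϱ - conj ϱ‖ = 2 * ϱ.im := by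
    rw [Complex.sub_conj]; simp [abs_of_pos hϱ]
  have hh : ‖hfun (Bc ϱ (g * γ * g⁻¹)) (Cc ϱ (g * γ * g⁻¹)) (wf ϱ z g)‖ ≤ K * δ := by
    have e := congrArg norm (key_id hϱ hz g γ hp)
    rw [norm_mul I, Complex.norm_I, one_mul] at e
    rw [← e, hδ, norm_wf hϱ hz g, norm_mul, norm_div, norm_mul, hsub]
    have e2 : ‖pf ϱ z g‖ = ‖wf ϱ z g‖ * ‖pf (conj ϱ) z g‖ := by
      rw [wf, norm_div]; field_simp
    rw [e2, hK]
    have hwp : 0 < ‖wf ϱ z g‖ := by linarith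
    have : ‖Qpoly γ z‖ / z.im * (4 * ϱ.im * z.im / ‖pf (conj ϱ) z g‖ ^ 2) =
      ‖Qpoly γ z‖ * (4 * ϱ.im / (‖pf (conj ϱ) z g‖ ^ 2)) := by field_simp
    rw [this]
    refine mul_le_mul_of_nonneg_left ?_ (norm_nonneg _)
    rw [div_le_div_iff₀ (by positivity) (by positivity)]
    have : 0 ≤ ϱ.im * ‖pf (conj ϱ) z g‖ ^ 2 := by positivity
    nlinarith
  have hb' := hb _ _ _ h1 hw1 (by rw [disc_BC hϱ, tr_conj]) hh
  have hpot := pot_bound (Vpot_spec n (Bc ϱ (g * γ * g⁻¹)) (Cc ϱ (g * γ * g⁻¹))) (wf ϱ z g) h1 hw1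
    ((K' * δ) ^ n) (fun s hs => by
      rw [norm_pow]; exact pow_le_pow_left₀ (norm_nonneg _) (hb' s hs) n)
  rw [Real.norm_eq_abs]
  refine hpot.trans ?_
  rw [← hδ]
  have hδ1 : δ ≤ 1 := h2.trans h4
  have hδn : δ ^ n ≤ δ := by
    calc δ ^ n ≤ δ ^ 1 := pow_le_pow_of_le_one hδ0 hδ1 hn
      _ = δ := pow_one δ
  calc 2 * (K' * δ) ^ n * δ = 2 * K' ^ n * (δ ^ n * δ) := by rw [mul_pow]; ring
    _ ≤ 2 * K' ^ n * ((C / Nsq g) * (C / Nsq g)) := by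
      refine mul_le_mul_of_nonneg_left ?_ (by positivity)
      exact mul_le_mul (hδn.trans h2) h2 hδ0 (hδ0.trans h2)
    _ = _ := by ring

lemma piecewise_facts {σ : ℝ → ℂ} (hσ : PiecewiseC1 σ) :
    (∃ S : Set ℝ, S.Countable ∧ ∀ x ∈ Set.Ioo (0 : ℝ) 1 \ S, DifferentiableAt ℝ σ x) ∧
    IntervalIntegrable (deriv σ) volume 0 1 := by
  obtain ⟨hc, n, t, hn, ht0, htn, hmono, hd⟩ := hσ
  constructor
  · refine ⟨Set.range t, Set.countable_range t, ?_⟩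
    rintro x ⟨hx, hxS⟩
    have : ∃ i < n, t i < x ∧ x < t (i + 1) := by
      by_contra hcon
      push Not at hcon
      have : ∀ i ≤ n, t i < x := by
        intro i
        induction i with
        | zero => intro _; rw [ht0]; exact hx.1
        | succ i ih =>
          intro hi
          have h1 := hcon i (by omega) (ih (by omega))
          exact lt_of_le_of_ne h1 (fun h => hxS ⟨i + 1, h⟩)
      have := this n le_rfl
      rw [htn] at this
      linarith [hx.2]
    obtain ⟨i, hi, h1, h2⟩ := this
    exact ((hd i hi).differentiableOn (by norm_num)).differentiableAt (Icc_mem_nhds h1 h2)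
  · rw [← ht0, ← htn]
    refine IntervalIntegrable.trans_iterate (fun i hi => ?_)
    rcases (hmono i hi).eq_or_lt with h | h
    · rw [h]
    · have h1 : ContinuousOn (derivWithin σ (Set.Icc (t i) (t (i + 1)))) (Set.Icc (t i) (t (i + 1))) :=
        (hd i hi).continuousOn_derivWithin (uniqueDiffOn_Icc h) le_rfl
      have h2 : IntervalIntegrable (derivWithin σ (Set.Icc (t i) (t (i + 1)))) volume (t i) (t (i + 1)) :=
        ContinuousOn.intervalIntegrable_of_Icc h.le h1
      rw [intervalIntegrable_iff_integrableOn_Ioo_of_le h.le] at h2 ⊢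
      refine h2.congr_fun (fun x hx => ?_) measurableSet_Ioo
      exact derivWithin_of_mem_nhds (Icc_mem_nhds hx.1 hx.2)

lemma path_bounds {σ : ℝ → ℂ} (hc : ContinuousOn σ (Set.Icc 0 1))
    (h : ∀ t ∈ Set.Icc (0 : ℝ) 1, 0 < (σ t).im) :
    ∃ ε R : ℝ, 0 < ε ∧ 0 ≤ R ∧ ∀ t ∈ Set.Icc (0 : ℝ) 1, ε ≤ (σ t).im ∧ ‖σ t‖ ≤ R := by
  have hne : (Set.Icc (0 : ℝ) 1).Nonempty := ⟨0, by simp⟩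
  obtain ⟨t0, ht0, hmin⟩ := isCompact_Icc.exists_isMinOn hne
    (Complex.continuous_im.comp_continuousOn hc)
  obtain ⟨R, hR⟩ := isCompact_Icc.exists_bound_of_continuousOn hc
  refine ⟨(σ t0).im, R, h t0 ht0, (norm_nonneg _).trans (hR t0 ht0), fun t ht => ⟨hmin ht, hR t ht⟩⟩

lemma eta_cont {σ : ℝ → ℂ} (hc : ContinuousOn σ (Set.Icc 0 1)) {ϱ : ℂ} (hϱ : 0 < ϱ.im)
    (h : ∀ t ∈ Set.Icc (0 : ℝ) 1, σ t ∈ UH \ orbit ϱ) (k : ℕ) (g : SL2Z) :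
    ContinuousOn (fun t => etaTerm k ϱ (σ t) g) (Set.Icc 0 1) := by
  have : ContinuousOn (fun t => ((ϱ - conj ϱ) / (pf ϱ (σ t) g * pf (conj ϱ) (σ t) g)) ^ k)
      (Set.Icc 0 1) := by
    have hpc : ∀ r : ℂ, ContinuousOn (fun t => pf r (σ t) g) (Set.Icc 0 1) := by
      intro r
      unfold pf
      fun_prop
    refine (ContinuousOn.div continuousOn_const ((hpc _).mul (hpc _)) ?_).pow k
    intro t ht
    exact mul_ne_zero (pf_ne hϱ (h t ht).2 g) (pf_conj_ne hϱ (h t ht).1 g)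
  exact this.congr (fun t ht => etaTerm_eq (h t ht).1 k g)

lemma term_integral {σ : ℝ → ℂ} (hσ : PiecewiseC1 σ) {ϱ : ℂ} (hϱ : 0 < ϱ.im)
    (h : ∀ t ∈ Set.Icc (0 : ℝ) 1, σ t ∈ UH \ orbit ϱ) (n : ℕ) (γ g : SL2Z)
    (hi : IntervalIntegrable (fun t => etaTerm (n + 1) ϱ (σ t) g * Qpoly γ (σ t) ^ n * deriv σ t)
      volume 0 1) :
    ((I / (Real.sqrt (discr γ) : ℂ)) ^ n *
      ∫ t in (0 : ℝ)..1, etaTerm (n + 1) ϱ (σ t) g * Qpoly γ (σ t) ^ n * deriv σ t).re =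
    (-1 / Real.sqrt (discr γ)) ^ n * (uf n ϱ γ g (σ 1) - uf n ϱ γ g (σ 0)) := by
  obtain ⟨⟨S, hS, hdiff⟩, _⟩ := piecewise_facts hσ
  have hi2 := hi.const_mul ((I / (Real.sqrt (discr γ) : ℂ)) ^ n)
  rw [← intervalIntegral.integral_const_mul]
  have e1 := Complex.reCLM.intervalIntegral_comp_comm hi2
  simp only [Complex.reCLM_apply] at e1
  rw [← e1, mul_sub]
  have hint : IntervalIntegrable (fun t => ((I / (Real.sqrt (discr γ) : ℂ)) ^ n *
      (etaTerm (n + 1) ϱ (σ t) g * Qpoly γ (σ t) ^ n * deriv σ t)).re) volume 0 1 :=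
    ⟨hi2.1.re, hi2.2.re⟩
  obtain ⟨v1, v2, v3⟩ := Vpot_spec n (Bc ϱ (g * γ * g⁻¹)) (Cc ϱ (g * γ * g⁻¹))
  refine MeasureTheory.integral_eq_of_hasDerivAt_off_countable
    (fun t => (-1 / Real.sqrt (discr γ)) ^ n * uf n ϱ γ g (σ t)) _ hS ?_ ?_ hint
  · rw [Set.uIcc_of_le zero_le_one]
    refine continuousOn_const.mul (v1.comp (f := fun t => wf ϱ (σ t) g) ?_ ?_)
    · intro t ht
      have := (wf_hasDerivAt hϱ (h t ht).1 g).continuousAt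
      exact ContinuousAt.comp_continuousWithinAt (f := σ) (g := fun z => wf ϱ z g) this (hσ.1 t ht)
    · intro t ht
      exact wf_ne hϱ (h t ht).1 (h t ht).2 g
  · rw [min_eq_left zero_le_one, max_eq_right zero_le_one]
    intro t ht
    have htI : t ∈ Set.Icc (0 : ℝ) 1 := ⟨ht.1.1.le, ht.1.2.le⟩
    have hz := (h t htI).1
    have hz' : 0 < (σ t).im := hz
    have hp := pf_ne hϱ (h t htI).2 g
    have hq := pf_conj_ne hϱ hz g
    have hw := wf_ne hϱ hz (h t htI).2 g
    have d1 := (hdiff t ht).hasDerivAt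
    have d2 : HasDerivAt (fun s => wf ϱ (σ s) g) ((ϱ - conj ϱ) / pf (conj ϱ) (σ t) g ^ 2 * deriv σ t) t :=
      HasDerivAt.comp (h₂ := fun z => wf ϱ z g) t (wf_hasDerivAt hϱ hz g) d1
    have d3 := (v3 _ _ t d2 hw).const_mul ((-1 / Real.sqrt (discr γ)) ^ n)
    refine d3.congr_deriv ?_
    rw [← Complex.re_ofReal_mul]
    congr 1
    rw [etaTerm_eq hz', pow_succ _ n]
    have k1 := key_id hϱ hz g γ hp
    have k2 : (ϱ - conj ϱ) / pf (conj ϱ) (σ t) g ^ 2 * deriv σ t / wf ϱ (σ t) g =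
      (ϱ - conj ϱ) / (pf ϱ (σ t) g * pf (conj ϱ) (σ t) g) * deriv σ t := by
      rw [wf]; field_simp
    rw [k2]
    generalize (ϱ - conj ϱ) / (pf ϱ (σ t) g * pf (conj ϱ) (σ t) g) = X at *
    have k3 : X ^ n * X * Qpoly γ (σ t) ^ n = (I * hfun (Bc ϱ (g * γ * g⁻¹)) (Cc ϱ (g * γ * g⁻¹)) (wf ϱ (σ t) g)) ^ n * X := by
      rw [← k1, mul_pow]; ring
    rw [k3]
    have k4 : (((-1 / Real.sqrt (discr γ)) ^ n : ℝ) : ℂ) = (I / (Real.sqrt (discr γ) : ℂ)) ^ n * I ^ n := by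
      rw [← mul_pow, div_mul_eq_mul_div, Complex.I_mul_I]; push_cast; rfl
    rw [k4, mul_pow]
    ring

/-- The pairing of the Petersson Poincaré series `η_{k,ϱ}` with every closed geodesic on
`SL₂(ℤ)∖ℍ` vanishes: for every primitive hyperbolic `γ`, every base point `z₀` and every
piecewise `C¹` path `σ` in `ℍ ∖ SL₂(ℤ)ϱ` from `z₀` to `γz₀`,
`Re((i/√(d_γ))^(k−1) ∫_σ η_{k,ϱ}(z)·Q_γ(z,1)^(k−1) dz) = 0`. -/
theorem etaP_geodesic_pairing_vanishes (k : ℕ) (hk : 2 ≤ k) (ϱ : ℂ) (hϱ : ϱ ∈ UH)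
    (γ : SL2Z) (hhyp : IsHyperbolic γ) (hprim : IsPrimitive γ)
    (z₀ : ℂ) (hz₀ : z₀ ∈ UH \ orbit ϱ) (σ : ℝ → ℂ) (hσ : PiecewiseC1 σ)
    (h0 : σ 0 = z₀) (h1 : σ 1 = moeb γ z₀)
    (hσin : ∀ t ∈ Set.Icc (0 : ℝ) 1, σ t ∈ UH \ orbit ϱ) :
    (geodFactor k γ * pathInt (fun z => etaP k ϱ z * Qpoly γ z ^ (k - 1)) σ).re = 0 := by
  obtain ⟨n, rfl⟩ : ∃ n, k = n + 1 := ⟨k - 1, by omega⟩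
  have hn : 1 ≤ n := by omega
  have hϱ' : 0 < ϱ.im := hϱ
  have hz₀' : 0 < z₀.im := hz₀.1
  obtain ⟨_, hσ'⟩ := piecewise_facts hσ
  obtain ⟨ε, R, hε, hR, hb⟩ := path_bounds hσ.1 (fun t ht => (hσin t ht).1)
  obtain ⟨T, C, hC, hu⟩ := unif hϱ' hε hR
  have hQc : ContinuousOn (fun t => Qpoly γ (σ t) ^ n) (Set.Icc 0 1) := by
    have := hσ.1
    unfold Qpoly
    fun_prop
  obtain ⟨CQ, hCQ⟩ := isCompact_Icc.exists_bound_of_continuousOn hQc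
  have hCQ0 : 0 ≤ CQ := (norm_nonneg _).trans (hCQ 0 (by simp))
  have hFi : ∀ g : SL2Z, IntervalIntegrable
      (fun t => etaTerm (n + 1) ϱ (σ t) g * Qpoly γ (σ t) ^ n * deriv σ t) volume 0 1 := by
    intro g
    refine hσ'.continuousOn_mul ?_
    rw [Set.uIcc_of_le zero_le_one]
    exact (eta_cont hσ.1 hϱ' hσin (n + 1) g).mul hQc
  have hbd : ∀ g : SL2Z, ∃ b : ℝ, (∀ t ∈ Set.Icc (0 : ℝ) 1,
      ‖etaTerm (n + 1) ϱ (σ t) g * Qpoly γ (σ t) ^ n‖ ≤ b) ∧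
      (T ≤ Nsq g ∧ 0 < Nsq g → ‖b‖ ≤ CQ * C ^ 2 * (1 / Nsq g ^ 2)) := by
    intro g
    by_cases hg : T ≤ Nsq g ∧ 0 < Nsq g
    · refine ⟨CQ * C ^ 2 * (1 / Nsq g ^ 2), ?_, fun _ => ?_⟩
      · intro t ht
        obtain ⟨a1, a2, a3, a4⟩ := hu g hg.1 hg.2 (σ t) (hb t ht).1 (hb t ht).2
        rw [norm_mul, etaTerm_eq (hσin t ht).1, norm_pow]
        have a5 := pow_le_pow_left₀ (norm_nonneg _) a3 (n + 1)
        have a6 : (C / Nsq g) ^ (n + 1) ≤ (C / Nsq g) ^ 2 :=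
          pow_le_pow_of_le_one (div_nonneg hC.le hg.2.le) a4 (by omega)
        calc _ ≤ (C / Nsq g) ^ 2 * CQ :=
              mul_le_mul (a5.trans a6) (hCQ t ht) (norm_nonneg _) (by positivity)
          _ = _ := by ring
      · rw [Real.norm_of_nonneg (by positivity)]
    · obtain ⟨b, hb⟩ := isCompact_Icc.exists_bound_of_continuousOn
        ((eta_cont hσ.1 hϱ' hσin (n + 1) g).mul hQc)
      exact ⟨b, hb, fun h => absurd h hg⟩
  choose b hb1 hb2 using hbd
  have hbs : Summable b := by
    refine Summable.of_norm_bounded_eventually (summable_Nsq.mul_left (CQ * C ^ 2)) ?_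
    filter_upwards [ev_Nsq T] with g hg
    exact hb2 g hg
  have hsub : ∀ t ∈ Set.uIoc (0 : ℝ) 1, t ∈ Set.Icc (0 : ℝ) 1 := by
    intro t ht
    rw [Set.uIoc_of_le zero_le_one] at ht
    exact ⟨ht.1.le, ht.2⟩
  have hbn : ∀ (g : SL2Z), ∀ t ∈ Set.uIoc (0 : ℝ) 1,
      ‖etaTerm (n + 1) ϱ (σ t) g * Qpoly γ (σ t) ^ n * deriv σ t‖ ≤ b g * ‖deriv σ t‖ := by
    intro g t ht
    rw [norm_mul]
    exact mul_le_mul_of_nonneg_right (hb1 g t (hsub t ht)) (norm_nonneg _)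
  have hcount : Countable SL2Z := enc_inj.countable
  have hsum := intervalIntegral.hasSum_integral_of_dominated_convergence (μ := volume)
    (a := (0 : ℝ)) (b := 1)
    (F := fun (g : SL2Z) t => etaTerm (n + 1) ϱ (σ t) g * Qpoly γ (σ t) ^ n * deriv σ t)
    (f := fun t => ∑' g : SL2Z, etaTerm (n + 1) ϱ (σ t) g * Qpoly γ (σ t) ^ n * deriv σ t)
    (fun g t => b g * ‖deriv σ t‖)
    (fun g => (hFi g).def'.aestronglyMeasurable)
    (fun g => Filter.Eventually.of_forall (hbn g))
    (Filter.Eventually.of_forall (fun t _ => hbs.mul_right _))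
    (by
      simp only [tsum_mul_right]
      exact hσ'.norm.const_mul _)
    (Filter.Eventually.of_forall (fun t ht =>
      (Summable.of_norm_bounded (hbs.mul_right _) (fun g => hbn g t ht)).hasSum))
  have hP : pathInt (fun z => etaP (n + 1) ϱ z * Qpoly γ z ^ (n + 1 - 1)) σ = (1 / 2 : ℂ) *
      ∫ t in (0 : ℝ)..1, ∑' g : SL2Z, etaTerm (n + 1) ϱ (σ t) g * Qpoly γ (σ t) ^ n * deriv σ t := by
    rw [pathInt, ← intervalIntegral.integral_const_mul]
    congr 1
    ext t
    rw [tsum_mul_right, tsum_mul_right, etaP, Nat.add_sub_cancel]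
    ring
  have hs2 := Complex.hasSum_re (hsum.mul_left (geodFactor (n + 1) γ))
  have hterm : ∀ g : SL2Z, (geodFactor (n + 1) γ * ∫ t in (0 : ℝ)..1,
      etaTerm (n + 1) ϱ (σ t) g * Qpoly γ (σ t) ^ n * deriv σ t).re =
      (-1 / Real.sqrt (discr γ)) ^ n * (uf n ϱ γ (g * γ) z₀ - uf n ϱ γ g z₀) := by
    intro g
    have := term_integral hσ hϱ' hσin n γ g (hFi g)
    rw [geodFactor, Nat.add_sub_cancel, this, h1, h0, uf_moeb n ϱ γ g hz₀']
  simp only [hterm] at hs2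
  have hus := (uf_summable n hn hϱ' γ hz₀').hasSum
  have hus2 := (Equiv.mulRight γ).hasSum_iff.2 hus
  have hs3 := (hus2.sub hus).mul_left ((-1 / Real.sqrt (discr γ)) ^ n)
  have hz := hs2.unique hs3
  rw [sub_self, mul_zero] at hz
  rw [hP, mul_left_comm]
  have e : ∀ x : ℂ, ((1 / 2 : ℂ) * x).re = 1 / 2 * x.re := by
    intro x
    have : (1 / 2 : ℂ) = ((1 / 2 : ℝ) : ℂ) := by push_cast; rfl
    rw [this, Complex.re_ofReal_mul]
  rw [e, hz, mul_zero]
end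
end

section
/- Assume m < 0 and define w(z) := 2|m|/p_z(X)² on ℍ (note p_z(X) ≠ 0 for all z ∈ ℍ since m < 0). Then for every z = x + iy ∈ ℍ one has ∂w/∂z (z) = −( i / √(4N|m|) ) · sgn(p_z(X)) · y^{−2} · conj(Q_X(z)) · w(z)^{3/2}, where ∂/∂z = (1/2)(∂/∂x − i·∂/∂y). -/
open Complex ComplexConjugate Metric Set MeasureTheory

noncomputable section

/-- `m = (b² − 4Nac)/(4N)`, the value `q(X)` of the quadratic form at
`X = ((b/2N, c/N), (−a, −b/2N))`. -/
def mVal (N : ℕ) (a b c : ℝ) : ℝ := (b ^ 2 - 4 * N * a * c) / (4 * N)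

/-- The quadratic polynomial `Q_X(z) = aNz² + bz + c`. -/
def Qx (N : ℕ) (a b c : ℝ) (z : ℂ) : ℂ := (a : ℂ) * (N : ℂ) * z ^ 2 + (b : ℂ) * z + (c : ℂ)

/-- The quantity `p_z(X) = (aN|z|² + bx + c)/(√(2N)·y)`. -/
def pX (N : ℕ) (a b c : ℝ) (z : ℂ) : ℝ :=
  (a * N * Complex.normSq z + b * z.re + c) / (Real.sqrt (2 * N) * z.im)

/-- The argument `w(z) = 2|m|/p_z(X)²` of the hypergeometric series. -/
def wF (N : ℕ) (a b c : ℝ) (z : ℂ) : ℝ := 2 * |mVal N a b c| / (pX N a b c z) ^ 2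

/-- For `m < 0`, the function `w(z) = 2|m|/p_z(X)²` satisfies
`∂w/∂z = −(i/√(4N|m|))·sgn(p_z(X))·y^(−2)·conj(Q_X(z))·w(z)^(3/2)` on `ℍ`
(and `p_z(X) ≠ 0` throughout `ℍ`). -/
theorem dz_wF (N : ℕ) (hN : 1 ≤ N) (a b c : ℝ) (hm : mVal N a b c < 0) :
    (∀ z ∈ UH, pX N a b c z ≠ 0) ∧
    (∀ z ∈ UH, dz (fun w => ((wF N a b c w : ℝ) : ℂ)) z =
      -(Complex.I / ((Real.sqrt (4 * N * |mVal N a b c|) : ℝ) : ℂ)) *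
        ((Real.sign (pX N a b c z) : ℝ) : ℂ) * (((z.im : ℂ) ^ (2 : ℕ))⁻¹) *
        conj (Qx N a b c z) * ((wF N a b c z ^ ((3 : ℝ) / 2) : ℝ) : ℂ)) := by
  have hN0 : (0:ℝ) < N := by exact_mod_cast hN
  have hD : b ^ 2 - 4 * N * a * c < 0 := by
    unfold mVal at hm
    by_contra h
    push Not at h
    exact absurd hm (not_lt.mpr (by positivity))
  have hP : ∀ z ∈ UH, a * N * Complex.normSq z + b * z.re + c ≠ 0 := by
    intro z hz h
    rw [Complex.normSq_apply] at h
    have h2 : 4 * a * N * (a * N * (z.re * z.re + z.im * z.im) + b * z.re + c) = 0 := by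
      rw [h]; ring
    nlinarith [sq_nonneg (2 * a * N * z.re + b), sq_nonneg (2 * a * N * z.im)]
  have hr : 0 < Real.sqrt (2 * N) := Real.sqrt_pos.mpr (by positivity)
  have hr2 : Real.sqrt (2 * N) ^ 2 = 2 * N := Real.sq_sqrt (by positivity)
  have hp0 : ∀ z ∈ UH, pX N a b c z ≠ 0 := by
    intro z hz
    have hy : 0 < z.im := hz
    exact div_ne_zero (hP z hz) (by positivity)
  refine ⟨hp0, ?_⟩
  intro z hz
  have hy : 0 < z.im := hz
  have hPz := hP z hz
  have hm0 : 0 < |mVal N a b c| := abs_pos.mpr hm.ne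
  have hs : 0 < Real.sqrt (4 * N * |mVal N a b c|) := Real.sqrt_pos.mpr (by positivity)
  have hs2 : Real.sqrt (4 * N * |mVal N a b c|) ^ 2 = 4 * N * |mVal N a b c| :=
    Real.sq_sqrt (by positivity)
  set s := Real.sqrt (4 * N * |mVal N a b c|) with hsdef
  have hw : ∀ u : ℂ, wF N a b c u =
      (s * (u.im * (a * N * (u.re * u.re + u.im * u.im) + b * u.re + c)⁻¹)) ^ 2 := by
    intro u
    have : 4 * N * |mVal N a b c| = (2 * N) * (2 * |mVal N a b c|) := by ring
    rw [mul_pow, hs2, this, ← hr2]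
    unfold wF pX
    rw [Complex.normSq_apply, div_pow, mul_pow, div_div_eq_mul_div, mul_pow, div_eq_mul_inv, inv_pow]
    ring
  have hre : HasFDerivAt (fun u : ℂ => u.re) Complex.reCLM z := Complex.reCLM.hasFDerivAt
  have him : HasFDerivAt (fun u : ℂ => u.im) Complex.imCLM z := Complex.imCLM.hasFDerivAt
  rw [Complex.normSq_apply] at hPz
  have hPd := ((((hre.mul hre).add (him.mul him)).const_mul (a * N)).add (hre.const_mul b)).add_const c
  have hid := (hasDerivAt_inv hPz).comp_hasFDerivAt z hPd
  have hd := ((him.mul hid).const_mul s).pow 2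
  have hfd := Complex.ofRealCLM.hasFDerivAt.comp z hd
  have hrp : (wF N a b c z) ^ ((3:ℝ)/2) =
      (s * (z.im * |a * N * (z.re * z.re + z.im * z.im) + b * z.re + c|⁻¹)) ^ 3 := by
    have h1 : wF N a b c z =
      (s * (z.im * |a * N * (z.re * z.re + z.im * z.im) + b * z.re + c|⁻¹)) ^ 2 := by
      rw [hw, mul_pow, mul_pow, mul_pow, mul_pow, inv_pow, inv_pow, sq_abs]
    rw [h1, ← Real.rpow_natCast, ← Real.rpow_mul (by positivity), ← Real.rpow_natCast]
    norm_num
  have hsg : Real.sign (pX N a b c z) * |a * N * (z.re * z.re + z.im * z.im) + b * z.re + c|⁻¹ ^ 3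
      = (a * N * (z.re * z.re + z.im * z.im) + b * z.re + c)⁻¹ ^ 3 := by
    unfold pX
    rw [Complex.normSq_apply]
    rcases lt_or_gt_of_ne hPz with h | h
    · rw [Real.sign_of_neg (div_neg_of_neg_of_pos h (by positivity)), abs_of_neg h, inv_neg]; ring
    · rw [Real.sign_of_pos (div_pos h (by positivity)), abs_of_pos h]; ring
  have hfun : (fun w => ((wF N a b c w : ℝ) : ℂ)) = fun u : ℂ => (((
      (s * (u.im * (a * N * (u.re * u.re + u.im * u.im) + b * u.re + c)⁻¹)) ^ 2 : ℝ)) : ℂ) := by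
    funext u; rw [hw]
  have hfd2 := hfd.fderiv
  have hfx : fderiv ℝ (fun w => ((wF N a b c w : ℝ) : ℂ)) z 1 =
      ((-2 * s ^ 2 * z.im ^ 2 * (a * N * (z.re * z.re + z.im * z.im) + b * z.re + c)⁻¹ ^ 3 *
        (2 * a * N * z.re + b) : ℝ) : ℂ) := by
    rw [hfun]
    refine (congrArg (fun L : ℂ →L[ℝ] ℂ => L 1) hfd2).trans ?_
    refine congrArg Complex.ofReal (?_ : _ = (_ : ℝ))
    simp
    generalize a * N * (z.re * z.re + z.im * z.im) + b * z.re + c = P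
    ring
  have hfy : fderiv ℝ (fun w => ((wF N a b c w : ℝ) : ℂ)) z Complex.I =
      ((2 * s ^ 2 * z.im * ((a * N * (z.re * z.re + z.im * z.im) + b * z.re + c)⁻¹ ^ 2 -
        z.im * (a * N * (z.re * z.re + z.im * z.im) + b * z.re + c)⁻¹ ^ 3 *
        (2 * a * N * z.im)) : ℝ) : ℂ) := by
    rw [hfun]
    refine (congrArg (fun L : ℂ →L[ℝ] ℂ => L Complex.I) hfd2).trans ?_
    refine congrArg Complex.ofReal (?_ : _ = (_ : ℝ))
    simp
    generalize a * N * (z.re * z.re + z.im * z.im) + b * z.re + c = P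
    ring
  have hR : -(Complex.I / (s : ℂ)) *
        ((Real.sign (pX N a b c z) : ℝ) : ℂ) * (((z.im : ℂ) ^ (2 : ℕ))⁻¹) *
        conj (Qx N a b c z) * ((wF N a b c z ^ ((3 : ℝ) / 2) : ℝ) : ℂ) =
      -Complex.I * conj (Qx N a b c z) * ((s ^ 2 * z.im * (a * N * (z.re * z.re + z.im * z.im) + b * z.re + c)⁻¹ ^ 3 : ℝ) : ℂ) := by
    rw [hrp, ← hsg]
    have hsc : (s : ℂ) ≠ 0 := by exact_mod_cast hs.ne'
    have hyc : (z.im : ℂ) ≠ 0 := by exact_mod_cast hy.ne'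
    generalize |a * N * (z.re * z.re + z.im * z.im) + b * z.re + c|⁻¹ = t
    push_cast
    field_simp
  rw [hR]
  unfold dz
  rw [hfx, hfy]
  have hQ : conj (Qx N a b c z) = ((a * N * (z.re * z.re - z.im * z.im) + b * z.re + c : ℝ) : ℂ)
      - Complex.I * ((2 * a * N * z.re * z.im + b * z.im : ℝ) : ℂ) := by
    apply Complex.ext <;> simp [Qx, pow_two] <;> ring
  rw [hQ]
  have hinv : (a * N * (z.re * z.re + z.im * z.im) + b * z.re + c)⁻¹ ^ 2 =
      (a * N * (z.re * z.re + z.im * z.im) + b * z.re + c) *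
        (a * N * (z.re * z.re + z.im * z.im) + b * z.re + c)⁻¹ ^ 3 := by
    field_simp
  rw [hinv]
  generalize (a * N * (z.re * z.re + z.im * z.im) + b * z.re + c)⁻¹ ^ 3 = t
  push_cast
  linear_combination (-(s:ℂ) ^ 2 * z.im * t * (2 * a * N * z.re * z.im + b * z.im)) * Complex.I_sq
end
end
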